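/- arXiv:math/0410246 — 5 statements merged into one kernel-verified Lean document; each statement's English description precedes it below -/
import Mathlib

section
/- Let K be a field of characteristic 0, let n ≥ 4 and ℓ ≥ 1 be integers, let α and γ be nonzero elements of K and β ∈ K. Let L = K(t_1,…,t_{n-1}, t) be the field of rational functions in n independent variables over K. Then the polynomial (x−t_1)⋯(x−t_{n-1})·(x − (α t^ℓ + β)/(t_1⋯t_{n-1})) − γ ∈ L[x] is separable and its Galois group over L is isomorphic to the symmetric group S_n. -/
open Polynomial

/-- The polynomial `(x−t_1)⋯(x−t_{n-1})·(x − (α t^ℓ + β)/(t_1⋯t_{n-1})) − γ` over the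
rational function field `L = K(t_1,…,t_{n-1},t)`; here the variables are indexed by
`Option (Fin (n-1))`, with `some i ↦ t_i` and `none ↦ t`. -/
noncomputable def auxPoly (K : Type*) [Field K] (n ℓ : ℕ) (α β γ : K) :
    Polynomial (FractionRing (MvPolynomial (Option (Fin (n - 1))) K)) :=
  (∏ i : Fin (n - 1), (X - C (algebraMap (MvPolynomial (Option (Fin (n - 1))) K)
      (FractionRing (MvPolynomial (Option (Fin (n - 1))) K)) (MvPolynomial.X (some i))))) *
    (X - C ((algebraMap (MvPolynomial (Option (Fin (n - 1))) K)
        (FractionRing (MvPolynomial (Option (Fin (n - 1))) K)) (MvPolynomial.C α) *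
        algebraMap (MvPolynomial (Option (Fin (n - 1))) K)
        (FractionRing (MvPolynomial (Option (Fin (n - 1))) K)) (MvPolynomial.X none) ^ ℓ +
        algebraMap (MvPolynomial (Option (Fin (n - 1))) K)
        (FractionRing (MvPolynomial (Option (Fin (n - 1))) K)) (MvPolynomial.C β)) /
      ∏ i : Fin (n - 1), algebraMap (MvPolynomial (Option (Fin (n - 1))) K)
        (FractionRing (MvPolynomial (Option (Fin (n - 1))) K)) (MvPolynomial.X (some i)))) -
    C (algebraMap (MvPolynomial (Option (Fin (n - 1))) K)
      (FractionRing (MvPolynomial (Option (Fin (n - 1))) K)) (MvPolynomial.C γ))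

/-!
Let `y` be the roots, in an algebraic closure `Ω` of `L`, of `P = ∏ (x - a) - γ`, where `a` runs
over the `t_i` and `f(t) / ∏ t_i`.

The Galois group of `P` is normal in the full group of permutations of `y`. Indeed
`∏ (x - a) = ∏ (x - y) + γ`, so `a` and `y` play symmetric roles: `∏ y = f(t) ± γ`, all but one of
the `y`, together with `t`, form a transcendence basis of `Ω` over `K`, and hence every permutation
of `y` extends to an automorphism of `Ω` fixing `K` and `t`. It permutes the roots `a` of
`∏ (x - y) + γ`, so it maps `L` into itself and normalizes the Galois group.

The Galois group also contains an odd permutation, because the discriminant of `P` is not a square.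
After clearing denominators this can be tested at `t_i = 1`, where `P` becomes
`(x - 1) ^ (n - 1) * (x - f(t)) - γ`, whose discriminant is, up to a constant factor,
`(n - 1) ^ (n - 1) * (f(t) - 1) ^ n + n ^ n * γ`. For `f(t) = α t ^ ℓ + β` this has a simple root.

A normal subgroup of `S_n` containing an odd permutation is `S_n`.
-/

section NormalSubgroups

open Equiv Equiv.Perm
open scoped commutatorElement

variable {α : Type*} [DecidableEq α]

lemma commutator_swap_apply_eq (ρ : Perm α) (a : α) :
    ⁅ρ, swap a (ρ a)⁆ = swap (ρ a) (ρ (ρ a)) * swap (ρ a) a := by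
  rw [commutatorElement_def, swap_inv, ← swap_apply_apply, swap_comm a]

variable {N : Subgroup (Perm α)} [N.Normal] {ρ : Perm α}

lemma normal_eq_top_of_isSwap_mem [Finite α] (hρ : ρ.IsSwap) (hρN : ρ ∈ N) : N = ⊤ := by
  rw [eq_top_iff, ← closure_isSwap, Subgroup.closure_le]
  rintro _ ⟨a, b, hab, rfl⟩
  obtain ⟨x, y, hxy, rfl⟩ := hρ
  obtain ⟨σ, hσ⟩ := isConj_iff.1 (isConj_swap hxy hab)
  exact hσ ▸ ‹N.Normal›.conj_mem _ hρN σ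

variable [Fintype α]

lemma alternatingGroup_le_of_normal_of_isThreeCycle_mem (hρ : ρ.IsThreeCycle) (hρN : ρ ∈ N) :
    alternatingGroup α ≤ N := by
  rw [← closure_three_cycles_eq_alternating, Subgroup.closure_le]
  intro τ hτ
  obtain ⟨σ, rfl⟩ := isConj_iff.1 (isConj_iff_cycleType_eq.2 (hρ.cycleType.trans hτ.cycleType.symm))
  exact ‹N.Normal›.conj_mem ρ hρN σ

lemma isThreeCycle_commutator_swap_apply {a : α} (ha : ρ (ρ a) ≠ a) :
    ⁅ρ, swap a (ρ a)⁆.IsThreeCycle := by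
  have hρa : ρ a ≠ a := fun h => ha (by rw [h, h])
  rw [commutator_swap_apply_eq]
  exact isThreeCycle_swap_mul_swap_same (fun h => hρa (ρ.injective h).symm) hρa ha

lemma isSwap_of_sq_eq_one_of_sign_ne_one (hα : Fintype.card α ≤ 4) (hsq : ρ ^ 2 = 1)
    (hsign : sign ρ ≠ 1) : ρ.IsSwap := by
  have horder : orderOf ρ = 2 :=
    orderOf_eq_prime hsq fun h => hsign (by rw [h, map_one])
  obtain ⟨m, hm⟩ := cycleType_prime_order (horder ▸ Nat.prime_two)
  rw [horder] at hm
  have hsupport : 2 + m * 2 ≤ 4 := by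
    simpa [hm] using ρ.sum_cycleType.trans_le (ρ.support.card_le_univ.trans hα)
  have hm1 : m ≠ 1 := by
    rintro rfl
    exact hsign (by rw [sign_of_cycleType, hm]; decide)
  obtain rfl : m = 0 := by omega
  exact isSwap_iff_cycleType.2 hm

lemma eq_top_of_alternatingGroup_le {H : Subgroup (Perm α)} (hH : alternatingGroup α ≤ H)
    (hρH : ρ ∈ H) (hsign : sign ρ ≠ 1) : H = ⊤ := by
  rw [eq_top_iff]
  intro τ _
  by_cases hτ : sign τ = 1
  · exact hH (mem_alternatingGroup.2 hτ)
  · have hτρ : τ * ρ⁻¹ ∈ alternatingGroup α := by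
      rw [mem_alternatingGroup, map_mul, map_inv, Int.units_ne_iff_eq_neg.1 hτ,
        Int.units_ne_iff_eq_neg.1 hsign, mul_inv_cancel]
    simpa using H.mul_mem (hH hτρ) hρH

theorem normal_eq_top_of_sign_ne_one (hρN : ρ ∈ N) (hsign : sign ρ ≠ 1) : N = ⊤ := by
  rcases le_or_gt 5 (Nat.card α) with hα | hα
  · have hN : Nontrivial N := ⟨⟨⟨ρ, hρN⟩, 1, fun h => hsign (by
      rw [show ρ = 1 from congrArg Subtype.val h, map_one])⟩⟩
    exact eq_top_of_alternatingGroup_le (alternatingGroup_le_of_normal hα hN) hρN hsign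
  by_cases hinv : ∀ a, ρ (ρ a) = a
  · rw [Nat.card_eq_fintype_card] at hα
    have hswap : ρ.IsSwap :=
      isSwap_of_sq_eq_one_of_sign_ne_one (by omega) (Equiv.ext fun a => by simp [sq, hinv]) hsign
    exact normal_eq_top_of_isSwap_mem hswap hρN
  · obtain ⟨a, ha⟩ := not_forall.1 hinv
    have hcomm : ⁅ρ, swap a (ρ a)⁆ ∈ N := by
      rw [commutatorElement_def, mul_assoc, mul_assoc, ← mul_assoc (swap _ _)]
      exact N.mul_mem hρN (‹N.Normal›.conj_mem _ (N.inv_mem hρN) _)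
    exact eq_top_of_alternatingGroup_le (alternatingGroup_le_of_normal_of_isThreeCycle_mem
      (isThreeCycle_commutator_swap_apply ha) hcomm) hρN hsign

end NormalSubgroups

lemma exists_algEquiv_of_isTranscendenceBasis {K Ω ι : Type*} [Field K] [Field Ω] [Algebra K Ω]
    [IsAlgClosed Ω] {v w : ι → Ω} (hv : IsTranscendenceBasis K v)
    (hw : IsTranscendenceBasis K w) : ∃ φ : Ω ≃ₐ[K] Ω, ∀ i, φ (v i) = w i := by
  have := IsAlgClosed.isAlgClosure_of_transcendence_basis v hv
  have := IsAlgClosed.isAlgClosure_of_transcendence_basis w hw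
  let e : Algebra.adjoin K (Set.range v) ≃ₐ[K] Algebra.adjoin K (Set.range w) :=
    hv.1.aevalEquiv.symm.trans hw.1.aevalEquiv
  let φ : Ω ≃+* Ω := IsAlgClosure.equivOfEquiv Ω Ω e.toRingEquiv
  have hφ (x : Algebra.adjoin K (Set.range v)) : φ (algebraMap _ Ω x) = algebraMap _ Ω (e x) :=
    IsAlgClosure.equivOfEquiv_algebraMap Ω Ω e.toRingEquiv x
  refine ⟨AlgEquiv.ofRingEquiv (f := φ) fun r => ?_, fun i => ?_⟩
  · exact (hφ (algebraMap K _ r)).trans (congrArg (algebraMap _ Ω) (e.commutes r))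
  · change φ (v i) = w i
    simpa [e, AlgebraicIndependent.algebraMap_aevalEquiv] using
      hφ (hv.1.aevalEquiv (MvPolynomial.X i))

section InducedPerms

open Equiv

variable {L Ω ι : Type*} [Field L] [Field Ω] [Algebra L Ω]

/-- The permutations of the index type of a family `y` that are induced by `L`-automorphisms of
`Ω`. If `y` enumerates the distinct roots in `Ω` of a polynomial over `L`, this is its Galois group
in the classical sense, as a group of permutations of the roots. -/
def inducedPerms (L : Type*) [Field L] [Algebra L Ω] (y : ι → Ω) : Subgroup (Perm ι) where
  carrier := {ρ | ∃ g : Ω ≃ₐ[L] Ω, ∀ i, g (y i) = y (ρ i)}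
  one_mem' := ⟨1, fun _ => rfl⟩
  mul_mem' := by
    rintro ρ τ ⟨g, hg⟩ ⟨h, hh⟩
    exact ⟨g * h, fun i => by rw [AlgEquiv.mul_apply, hh, hg, Perm.mul_apply]⟩
  inv_mem' := by
    rintro ρ ⟨g, hg⟩
    exact ⟨g.symm, fun i => by
      rw [AlgEquiv.symm_apply_eq, hg, ← Perm.mul_apply, mul_inv_cancel, Perm.one_apply]⟩

lemma mem_inducedPerms {y : ι → Ω} {ρ : Perm ι} :
    ρ ∈ inducedPerms L y ↔ ∃ g : Ω ≃ₐ[L] Ω, ∀ i, g (y i) = y (ρ i) :=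
  Iff.rfl

lemma inducedPerms_mul_algebraMap (y : ι → Ω) {c : L} (hc : c ≠ 0) :
    inducedPerms L (fun i => algebraMap L Ω c * y i) = inducedPerms L y := by
  ext ρ
  have hc' : algebraMap L Ω c ≠ 0 := by simpa using hc
  simp [mem_inducedPerms, hc']

lemma normal_inducedPerms_of_forall_exists_ringEquiv {y : ι → Ω}
    (h : ∀ σ : Perm ι, ∃ φ : Ω ≃+* Ω, (∀ i, φ (y i) = y (σ i)) ∧
      ∀ c : L, φ (algebraMap L Ω c) ∈ (algebraMap L Ω).range) :
    (inducedPerms L y).Normal := by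
  refine ⟨fun ρ ⟨g, hg⟩ σ => ?_⟩
  obtain ⟨φ, hφy, hφL⟩ := h σ⁻¹
  refine ⟨AlgEquiv.ofRingEquiv (f := (φ.trans g.toRingEquiv).trans φ.symm) fun c => ?_,
    fun i => ?_⟩
  · obtain ⟨c', hc'⟩ := hφL c
    change φ.symm (g (φ (algebraMap L Ω c))) = _
    rw [← hc', g.commutes, hc', φ.symm_apply_apply]
  · change φ.symm (g (φ (y i))) = y ((σ * ρ * σ⁻¹) i)
    rw [hφy, hg, RingEquiv.symm_apply_eq, hφy, ← Perm.mul_apply, ← Perm.mul_apply, mul_assoc,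
      inv_mul_cancel_left]

variable [Fintype ι] {P : L[X]} {y : ι → Ω}

lemma isRoot_prod_X_sub_C_iff {R : Type*} [CommRing R] [IsDomain R] {y : ι → R} {x : R} :
    (∏ i, (X - C (y i))).IsRoot x ↔ ∃ i, y i = x := by
  simp only [IsRoot.def, eval_prod, Finset.prod_eq_zero_iff, Finset.mem_univ, true_and, eval_sub,
    eval_X, eval_C, sub_eq_zero, eq_comm (a := x)]

lemma mem_rootSet_iff_exists_eq (hP : P.map (algebraMap L Ω) = ∏ i, (X - C (y i))) {x : Ω} :
    x ∈ P.rootSet Ω ↔ ∃ i, y i = x := by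
  rw [mem_rootSet', aeval_def, ← eval_map, hP, ← IsRoot.def, isRoot_prod_X_sub_C_iff]
  exact and_iff_right (monic_prod_of_monic _ _ fun i _ => monic_X_sub_C _).ne_zero

lemma exists_perm_of_algEquiv (hy : Function.Injective y)
    (hP : P.map (algebraMap L Ω) = ∏ i, (X - C (y i))) (g : Ω ≃ₐ[L] Ω) :
    ∃ ρ : Perm ι, ∀ i, g (y i) = y (ρ i) := by
  have hroot (i : ι) : ∃ j, y j = g (y i) := by
    rw [← mem_rootSet_iff_exists_eq hP]
    exact rootSet_mapsTo (g : Ω →ₐ[L] Ω) ((mem_rootSet_iff_exists_eq hP).2 ⟨i, rfl⟩)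
  choose r hr using hroot
  have hr_inj : Function.Injective r := fun i j hij =>
    hy (g.injective (by rw [← hr, ← hr, hij]))
  exact ⟨.ofBijective r (Finite.injective_iff_bijective.1 hr_inj), fun i => (hr i).symm⟩

lemma nonempty_gal_mulEquiv_perm [IsAlgClosed Ω] (hy : Function.Injective y)
    (hP : P.map (algebraMap L Ω) = ∏ i, (X - C (y i))) (htop : inducedPerms L y = ⊤) :
    Nonempty (P.Gal ≃* Perm ι) := by
  have : Fact ((P.map (algebraMap L Ω)).Splits) := ⟨IsAlgClosed.splits _⟩
  let e : ι ≃ P.rootSet Ω := .ofBijective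
    (fun i => ⟨y i, (mem_rootSet_iff_exists_eq hP).2 ⟨i, rfl⟩⟩)
    ⟨fun i j hij => hy (congrArg Subtype.val hij), fun ⟨x, hx⟩ =>
      ((mem_rootSet_iff_exists_eq hP).1 hx).imp fun i hi => Subtype.ext hi⟩
  have hsurj : Function.Surjective (Gal.galActionHom P Ω) := by
    intro σ
    obtain ⟨g, hg⟩ : e.symm.permCongr σ ∈ inducedPerms L y := htop ▸ Subgroup.mem_top _
    refine ⟨Gal.restrict P Ω g, Equiv.ext fun x => Subtype.ext ?_⟩
    obtain ⟨i, rfl⟩ := e.surjective x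
    rw [Gal.galActionHom_restrict]
    refine (hg i).trans (congrArg Subtype.val (?_ : e _ = _))
    rw [permCongr_apply, symm_symm, apply_symm_apply]
  exact ⟨(MulEquiv.ofBijective _ ⟨Gal.galActionHom_injective P Ω, hsurj⟩).trans
    e.symm.permCongrHom⟩

end InducedPerms

section Discriminant

variable {R S : Type*} [CommRing R] [CommRing S]

lemma discr_eq_of_monic {f : R[X]} (hf : f.Monic) {n : ℕ} (hn : f.natDegree = n) :
    f.discr = (-1) ^ (n * (n - 1) / 2) * resultant f (derivative f) n (n - 1) := by
  subst hn
  rcases f.natDegree.eq_zero_or_pos with hdeg | hdeg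
  · rw [hf.natDegree_eq_zero.1 hdeg, ← C_1, discr_C]
    simp
  · rw [resultant_deriv (natDegree_pos_iff_degree_pos.1 hdeg), hf.leadingCoeff, mul_one,
      ← mul_assoc, ← mul_pow, neg_one_mul, neg_neg, one_pow, one_mul]

lemma discr_map_of_monic {f : R[X]} (hf : f.Monic) (φ : R →+* S) :
    (f.map φ).discr = φ f.discr := by
  nontriviality S
  rw [discr_eq_of_monic (hf.map φ) (hf.natDegree_map φ), discr_eq_of_monic hf rfl, derivative_map,
    resultant_map_map, map_mul, map_pow, map_neg, map_one]

lemma resultant_derivative_prod_X_sub_C {ι : Type*} [Fintype ι] [DecidableEq ι] (y : ι → R) :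
    resultant (∏ i, (X - C (y i))) (derivative (∏ i, (X - C (y i)))) (Fintype.card ι)
      (Fintype.card ι - 1) = ∏ i, ∏ j ∈ {i}ᶜ, (y i - y j) := by
  nontriviality R
  have hdeg : (∏ i, (X - C (y i))).natDegree = Fintype.card ι := by
    rw [natDegree_prod_of_monic _ _ fun i _ => monic_X_sub_C _]; simp
  have hdeg' : (derivative (∏ i, (X - C (y i)))).natDegree ≤ Fintype.card ι - 1 :=
    hdeg ▸ natDegree_derivative_le _
  have hres := resultant_prod_left Finset.univ (fun i => X - C (y i)) _ _ (by simp) hdeg'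
  rw [hdeg] at hres
  rw [hres]
  refine Finset.prod_congr rfl fun i _ => ?_
  have hnodal := Lagrange.eval_nodal_derivative_eval_node_eq (v := y) (Finset.mem_univ i)
  rw [Lagrange.eval_nodal, Finset.erase_eq, ← Finset.compl_eq_univ_sdiff] at hnodal
  rw [natDegree_X_sub_C, resultant_X_sub_C_left _ _ _ hdeg', ← hnodal, Lagrange.nodal]

lemma sum_card_Ioi_fin (n : ℕ) : ∑ i : Fin n, (Finset.Ioi i).card = n * (n - 1) / 2 := by
  simp only [Fin.card_Ioi]
  rw [Fin.sum_univ_eq_sum_range (fun i => n - 1 - i), Finset.sum_range_reflect (fun i => i),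
    Finset.sum_range_id]

lemma discr_prod_X_sub_C {n : ℕ} (y : Fin n → R) :
    (∏ i, (X - C (y i))).discr = (Matrix.vandermonde y).det ^ 2 := by
  nontriviality R
  have hdeg : (∏ i, (X - C (y i))).natDegree = n := by
    rw [natDegree_prod_of_monic _ _ fun i _ => monic_X_sub_C _]; simp
  have hres := resultant_derivative_prod_X_sub_C y
  rw [Fintype.card_fin] at hres
  rw [discr_eq_of_monic (monic_prod_of_monic _ _ fun i _ => monic_X_sub_C _) hdeg, hres,
    ← Finset.prod_prod_Ioi_mul_eq_prod_prod_off_diag fun j i => y i - y j, Matrix.det_vandermonde,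
    ← sum_card_Ioi_fin, ← Finset.prod_pow_eq_pow_sum, ← Finset.prod_pow, ← Finset.prod_mul_distrib]
  refine Finset.prod_congr rfl fun i _ => ?_
  rw [← Finset.prod_const, ← Finset.prod_pow, ← Finset.prod_mul_distrib]
  exact Finset.prod_congr rfl fun j _ => by ring

section AlmostPower

variable (k : ℕ) {a b θ : R} (g : R)

lemma monic_X_sub_C_pow_mul_X_sub_C_sub_C : ((X - C a) ^ (k + 1) * (X - C b) - C g).Monic := by
  nontriviality R
  monicity!

lemma natDegree_X_sub_C_pow_mul_X_sub_C_sub_C [Nontrivial R] :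
    ((X - C a) ^ (k + 1) * (X - C b) - C g).natDegree = k + 2 := by
  compute_degree!

lemma derivative_X_sub_C_pow_mul_X_sub_C_sub_C (hθ : (k + 2) * θ = (k + 1) * b + a) :
    derivative ((X - C a) ^ (k + 1) * (X - C b) - C g) =
      (X - C a) ^ k * (C ((k : R) + 2) * (X - C θ)) := by
  have hθ' := congrArg C hθ
  simp only [derivative_sub, derivative_mul, derivative_X_sub_C_pow, derivative_C, derivative_X,
    C_add, C_mul, map_natCast, map_ofNat, C_1, Nat.cast_add, Nat.cast_one,
    Nat.add_sub_cancel] at hθ' ⊢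
  linear_combination (X - C a) ^ k * hθ'

lemma eval_X_sub_C_pow_mul_X_sub_C_sub_C (hθ : (k + 2) * θ = (k + 1) * b + a) :
    (k + 2) ^ (k + 2) * eval θ ((X - C a) ^ (k + 1) * (X - C b) - C g) =
      -((k + 1) ^ (k + 1) * (b - a) ^ (k + 2) + (k + 2) ^ (k + 2) * g) := by
  have hθa : (k + 2) * (θ - a) = (k + 1) * (b - a) := by linear_combination hθ
  have hθb : (k + 2) * (θ - b) = -(b - a) := by linear_combination hθ
  calc (k + 2) ^ (k + 2) * eval θ ((X - C a) ^ (k + 1) * (X - C b) - C g)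
      = ((k + 2) * (θ - a)) ^ (k + 1) * ((k + 2) * (θ - b)) - (k + 2) ^ (k + 2) * g := by
        simp only [eval_sub, eval_mul, eval_pow, eval_X, eval_C, mul_pow]
        ring
    _ = _ := by
        rw [hθa, hθb, mul_pow]
        ring

lemma resultant_derivative_X_sub_C_pow_mul_X_sub_C_sub_C (hk : IsUnit ((k : R) + 2)) :
    resultant ((X - C a) ^ (k + 1) * (X - C b) - C g)
      (derivative ((X - C a) ^ (k + 1) * (X - C b) - C g)) (k + 2) (k + 1) =
      (-1) ^ (k + 1) * g ^ k *
        ((k + 1) ^ (k + 1) * (b - a) ^ (k + 2) + (k + 2) ^ (k + 2) * g) := by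
  nontriviality R
  obtain ⟨u, hu⟩ := hk.exists_right_inv
  obtain ⟨θ, hθ⟩ : ∃ θ, (k + 2) * θ = (k + 1) * b + a :=
    ⟨u * ((k + 1) * b + a), by rw [← mul_assoc, hu, one_mul]⟩
  have hP := eval_X_sub_C_pow_mul_X_sub_C_sub_C k g hθ
  have hP' := derivative_X_sub_C_pow_mul_X_sub_C_sub_C k g hθ
  have hdeg := natDegree_X_sub_C_pow_mul_X_sub_C_sub_C k g (a := a) (b := b)
  have hPa : eval a ((X - C a) ^ (k + 1) * (X - C b) - C g) = -g := by simp
  set P := (X - C a) ^ (k + 1) * (X - C b) - C g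
  have hmul := resultant_mul_right P ((X - C a) ^ k) (C ((k : R) + 2) * (X - C θ)) (k + 2) hdeg.le
  rw [(monic_X_sub_C a).natDegree_pow, natDegree_C_mul_of_isUnit hk, natDegree_X_sub_C,
    natDegree_X_sub_C, mul_one, resultant_X_sub_C_pow_right _ _ _ _ hdeg.le, resultant_C_mul_right,
    resultant_X_sub_C_right _ _ _ hdeg.le, hPa] at hmul
  have hsign : (-1 : R) ^ ((k + 2) * k) * (-1) ^ k * (-1) ^ (k + 2) = (-1) ^ k := by
    rcases k.even_or_odd with hk | hk <;> simp [pow_add, pow_mul, hk.neg_one_pow]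
  rw [hP', hmul, neg_pow g]
  linear_combination (-1) ^ ((k + 2) * k) * (-1) ^ k * (-1) ^ (k + 2) * g ^ k * hP -
    g ^ k * ((k + 1) ^ (k + 1) * (b - a) ^ (k + 2) + (k + 2) ^ (k + 2) * g) * hsign

lemma discr_X_sub_C_pow_mul_X_sub_C_sub_C (hk : IsUnit ((k : R) + 2)) :
    ((X - C a) ^ (k + 1) * (X - C b) - C g).discr = (-1) ^ ((k + 1) * k / 2) * g ^ k *
      ((k + 1) ^ (k + 1) * (b - a) ^ (k + 2) + (k + 2) ^ (k + 2) * g) := by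
  nontriviality R
  have htriangle : (k + 2) * (k + 1) / 2 = (k + 1) * k / 2 + (k + 1) := by
    rw [← Nat.add_mul_div_left _ _ two_pos]
    ring_nf
  rw [discr_eq_of_monic (monic_X_sub_C_pow_mul_X_sub_C_sub_C k g)
    (natDegree_X_sub_C_pow_mul_X_sub_C_sub_C k g), show k + 2 - 1 = k + 1 from rfl,
    resultant_derivative_X_sub_C_pow_mul_X_sub_C_sub_C k g hk, htriangle, pow_add]
  have hsign : (-1 : R) ^ (k + 1) * (-1) ^ (k + 1) = 1 := by
    rw [← mul_pow, neg_one_mul, neg_neg, one_pow]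
  linear_combination (-1) ^ ((k + 1) * k / 2) * g ^ k *
    ((k + 1) ^ (k + 1) * (b - a) ^ (k + 2) + (k + 2) ^ (k + 2) * g) * hsign

end AlmostPower

end Discriminant

section OddPermutation

open Equiv

lemma map_det_vandermonde_of_perm {R : Type*} [CommRing R] {n : ℕ} {y : Fin n → R}
    {ρ : Perm (Fin n)} (φ : R →+* R) (hφ : ∀ i, φ (y i) = y (ρ i)) :
    φ (Matrix.vandermonde y).det = Perm.sign ρ * (Matrix.vandermonde y).det := by
  rw [← Matrix.det_permute, RingHom.map_det]
  congr 1
  ext i j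
  simp [Matrix.vandermonde, hφ]

variable {L Ω ι : Type*} [Field L] [Field Ω] [Algebra L Ω]

lemma exists_algEquiv_eq_neg_of_not_isSquare [Normal L Ω] {d : L} (hd : ¬IsSquare d) {δ : Ω}
    (hδ : δ ^ 2 = algebraMap L Ω d) : ∃ g : Ω ≃ₐ[L] Ω, g δ = -δ := by
  have hirr : Irreducible (X ^ 2 - C d) :=
    X_pow_sub_C_irreducible_of_prime Nat.prime_two fun b hb => hd ⟨b, by rw [← hb, sq]⟩
  have hminpoly {x : Ω} (hx : x ^ 2 = algebraMap L Ω d) : minpoly L x = X ^ 2 - C d :=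
    (minpoly.eq_of_irreducible_of_monic hirr (by simp [hx]) (monic_X_pow_sub_C d two_ne_zero)).symm
  rw [← isConjRoot_iff_exists_algEquiv, isConjRoot_def, hminpoly hδ,
    hminpoly ((neg_sq δ).trans hδ)]

variable [Fintype ι] {P : L[X]} {y : ι → Ω}

lemma algebraMap_discr_eq_det_vandermonde_sq {n : ℕ} (e : Fin n ≃ ι)
    (hP : P.map (algebraMap L Ω) = ∏ i, (X - C (y i))) :
    algebraMap L Ω P.discr = (Matrix.vandermonde (y ∘ e)).det ^ 2 := by
  have hmonic : P.Monic := (algebraMap L Ω).injective.monic_map_iff.2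
    (hP ▸ monic_prod_of_monic _ _ fun i _ => monic_X_sub_C _)
  rw [← discr_map_of_monic hmonic, hP, ← discr_prod_X_sub_C]
  exact congrArg discr (e.prod_comp fun i => X - C (y i)).symm

lemma injective_of_discr_ne_zero (hP : P.map (algebraMap L Ω) = ∏ i, (X - C (y i)))
    (hdiscr : P.discr ≠ 0) : Function.Injective y := by
  let e := (Fintype.equivFin ι).symm
  have hdet : (Matrix.vandermonde (y ∘ e)).det ≠ 0 := by
    rwa [← pow_ne_zero_iff two_ne_zero, ← algebraMap_discr_eq_det_vandermonde_sq e hP,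
      _root_.map_ne_zero]
  rw [← Function.Injective.of_comp_iff' y e.bijective]
  exact Matrix.det_vandermonde_ne_zero_iff.1 hdet

lemma exists_mem_inducedPerms_sign_ne_one [DecidableEq ι] [Normal L Ω] (hL : (2 : L) ≠ 0)
    (hP : P.map (algebraMap L Ω) = ∏ i, (X - C (y i))) (hdiscr : ¬IsSquare P.discr) :
    ∃ ρ ∈ inducedPerms L y, Perm.sign ρ ≠ 1 := by
  have hy : Function.Injective y :=
    injective_of_discr_ne_zero hP fun h => hdiscr (h ▸ IsSquare.zero)
  let e := (Fintype.equivFin ι).symm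
  obtain ⟨g, hg⟩ := exists_algEquiv_eq_neg_of_not_isSquare hdiscr
    (algebraMap_discr_eq_det_vandermonde_sq e hP).symm
  obtain ⟨ρ, hρ⟩ := exists_perm_of_algEquiv hy hP g
  refine ⟨ρ, ⟨g, hρ⟩, fun hsign => ?_⟩
  have hfix := map_det_vandermonde_of_perm (y := y ∘ e) (ρ := e.symm.permCongr ρ)
    (g : Ω →+* Ω) fun i => by simpa using hρ (e i)
  have hdet : (Matrix.vandermonde (y ∘ e)).det ≠ 0 :=
    Matrix.det_vandermonde_ne_zero_iff.2 (hy.comp e.injective)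
  have hΩ : (2 : Ω) ≠ 0 := by rwa [← map_ofNat (algebraMap L Ω), _root_.map_ne_zero]
  rw [Perm.sign_permCongr, hsign, Units.val_one, Int.cast_one, one_mul] at hfix
  refine mul_ne_zero hΩ hdet ?_
  linear_combination (hfix.symm.trans hg)

end OddPermutation

section Symmetry

open Equiv

lemma prod_eq_prod_sub_of_prod_X_sub_C_eq_sub_C {R κ : Type*} [CommRing R] [Fintype κ]
    {a y : κ → R} {c : R} (h : ∏ o, (X - C (y o)) = ∏ o, (X - C (a o)) - C c) :
    ∏ o, y o = ∏ o, a o - (-1) ^ Fintype.card κ * c := by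
  have h0 := congrArg (eval 0) h
  simp only [eval_prod, eval_sub, eval_X, eval_C, zero_sub, Finset.prod_neg,
    Finset.card_univ] at h0
  have hsign : (-1 : R) ^ Fintype.card κ * (-1) ^ Fintype.card κ = 1 := by
    rw [← mul_pow, neg_one_mul, neg_neg, one_pow]
  linear_combination (-1) ^ Fintype.card κ * h0 + (∏ o, a o - ∏ o, y o) * hsign

lemma isIntegral_of_prod_X_sub_C_eq_sub_C {R S κ : Type*} [CommRing R] [CommRing S] [Algebra R S]
    [Fintype κ] {a y : κ → S} {c : R} (hy : ∀ o, y o ∈ (algebraMap R S).range)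
    (h : ∏ o, (X - C (y o)) = ∏ o, (X - C (a o)) - C (algebraMap R S c)) (o : κ) :
    IsIntegral R (a o) := by
  choose y' hy' using hy
  nontriviality R
  refine ⟨∏ o, (X - C (y' o)) + C c, ?_, ?_⟩
  · refine (monic_prod_of_monic _ _ fun o _ => monic_X_sub_C _).add_of_left ?_
    refine degree_C_le.trans_lt (natDegree_pos_iff_degree_pos.1 ?_)
    rw [natDegree_prod_of_monic _ _ fun o _ => monic_X_sub_C _]
    simpa using Fintype.card_pos_iff.2 ⟨o⟩
  · rw [eval₂_eq_eval_map]
    simp only [Polynomial.map_add, Polynomial.map_prod, Polynomial.map_sub, map_X, map_C, hy', h,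
      sub_add_cancel, eval_prod]
    exact Finset.prod_eq_zero (Finset.mem_univ o) (by simp)

lemma exists_apply_eq_of_prod_X_sub_C_eq_sub_C {R κ : Type*} [CommRing R] [IsDomain R] [Fintype κ]
    {a y : κ → R} {c : R} (φ : R →+* R) {σ : Perm κ} (hφ : ∀ o, φ (y o) = y (σ o)) (hc : φ c = c)
    (h : ∏ o, (X - C (y o)) = ∏ o, (X - C (a o)) - C c) (o : κ) : ∃ o', a o' = φ (a o) := by
  have hfixed : (∏ o, (X - C (a o))).map φ = ∏ o, (X - C (a o)) := by
    rw [sub_eq_iff_eq_add.1 h.symm]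
    simp only [Polynomial.map_add, Polynomial.map_prod, Polynomial.map_sub, map_X, map_C, hφ, hc,
      Equiv.prod_comp σ fun o => X - C (y o)]
  rw [← isRoot_prod_X_sub_C_iff, ← hfixed]
  exact (isRoot_prod_X_sub_C_iff.2 ⟨o, rfl⟩).map

variable {K Ω ι : Type*} [Field K] [Field Ω] [Algebra K Ω] [Fintype ι] {f : K[X]} {γ : K}
  {t : Ω} {a y : Option ι → Ω}

lemma aeval_ne_zero_of_transcendental (ht : Transcendental K t) (hf : f.natDegree ≠ 0) :
    aeval t f ≠ 0 := by
  intro h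
  rw [transcendental_iff.1 ht f h, natDegree_zero] at hf
  exact hf rfl

lemma prod_eq_aeval_of_prod_X_sub_C_eq_sub_C (hprod : ∏ o, a o = aeval t f)
    (h : ∏ o, (X - C (y o)) = ∏ o, (X - C (a o)) - C (algebraMap K Ω γ)) :
    ∏ o, y o = aeval t (f - C ((-1) ^ Fintype.card (Option ι) * γ)) := by
  rw [prod_eq_prod_sub_of_prod_X_sub_C_eq_sub_C h, hprod, map_sub, aeval_C, map_mul, map_pow,
    map_neg, map_one]

lemma none_mem_of_prod_eq_aeval (F : IntermediateField K Ω) (ht : t ∈ F)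
    (hy : ∀ i, y (some i) ∈ F) (hprod : ∏ o, y o = aeval t f) (h0 : aeval t f ≠ 0) :
    y none ∈ F := by
  rw [← hprod, Fintype.prod_option] at h0
  rw [← mul_div_cancel_right₀ (y none) (right_ne_zero_of_mul h0), ← Fintype.prod_option, hprod]
  have hfF : aeval t f ∈ F := (Subalgebra.aeval_coe F.toSubalgebra ⟨t, ht⟩ f) ▸ SetLike.coe_mem _
  exact F.div_mem hfF (prod_mem fun i _ => hy i)

lemma algHom_apply_none_of_prod_eq_aeval {y' : Option ι → Ω} (φ : Ω →ₐ[K] Ω) (ht : φ t = t)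
    (hφ : ∀ i, φ (y (some i)) = y' (some i)) (hprod : ∏ o, y o = aeval t f)
    (hprod' : ∏ o, y' o = aeval t f) (h0 : aeval t f ≠ 0) : φ (y none) = y' none := by
  have hφprod : φ (∏ o, y o) = ∏ o, y' o := by rw [hprod, hprod', ← aeval_algHom_apply, ht]
  rw [← hprod', Fintype.prod_option] at h0
  simp only [Fintype.prod_option, map_mul, map_prod, hφ] at hφprod
  exact mul_right_cancel₀ (right_ne_zero_of_mul h0) hφprod

variable [DecidableEq ι]

theorem isTranscendenceBasis_update_none_of_prod_X_sub_C_eq_sub_C (hf : f.natDegree ≠ 0)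
    (hprod : ∏ o, a o = aeval t f)
    (h : ∏ o, (X - C (y o)) = ∏ o, (X - C (a o)) - C (algebraMap K Ω γ))
    (ha : IsTranscendenceBasis K (Function.update a none t)) :
    IsTranscendenceBasis K (Function.update y none t) := by
  set x := Function.update y none t with hx
  set F := IntermediateField.adjoin K (Set.range x)
  have hxF (o : Option ι) : x o ∈ F := IntermediateField.subset_adjoin _ _ ⟨o, rfl⟩
  have htF : t ∈ F := by simpa [hx] using hxF none
  have hyF (i : ι) : y (some i) ∈ F := by simpa [hx] using hxF (some i)
  have ht : Transcendental K t := by simpa using ha.1.transcendental none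
  have hyF' : y none ∈ F := none_mem_of_prod_eq_aeval F htF hyF
    (prod_eq_aeval_of_prod_X_sub_C_eq_sub_C hprod h)
    (aeval_ne_zero_of_transcendental ht (by rwa [natDegree_sub_C]))
  -- `a o` is a root of `∏ (X - y) + γ`, whose coefficients lie in `F`.
  have haF (o : Option ι) : IsIntegral F (a o) :=
    isIntegral_of_prod_X_sub_C_eq_sub_C (c := algebraMap K F γ)
      (fun o => ⟨⟨y o, o.rec hyF' hyF⟩, rfl⟩) h o
  have hbasis (o : Option ι) : IsAlgebraic F (Function.update a none t o) := by
    cases o with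
    | none => exact Function.update_self none t a ▸ isAlgebraic_algebraMap (⟨t, htF⟩ : F)
    | some i => simpa using (haF (some i)).isAlgebraic
  have halg : Algebra.IsAlgebraic (Algebra.adjoin K (Set.range x)) Ω := by
    refine ⟨fun z => IsAlgebraic.adjoin_of_forall_isAlgebraic
      (s := Set.range (Function.update a none t)) ?_ (ha.isAlgebraic.isAlgebraic z)⟩
    rintro _ ⟨⟨o, rfl⟩, -⟩
    exact IntermediateField.isAlgebraic_adjoin_iff.1 (hbasis o)
  apply Algebra.IsAlgebraic.isTranscendenceBasis_of_lift_le_trdeg_of_finite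
  rw [ha.lift_cardinalMk_eq_trdeg]

theorem exists_algEquiv_apply_eq_perm [IsAlgClosed Ω] (hf : f.natDegree ≠ 0)
    (hprod : ∏ o, a o = aeval t f)
    (h : ∏ o, (X - C (y o)) = ∏ o, (X - C (a o)) - C (algebraMap K Ω γ))
    (ha : IsTranscendenceBasis K (Function.update a none t)) (σ : Perm (Option ι)) :
    ∃ φ : Ω ≃ₐ[K] Ω, φ t = t ∧ ∀ o, φ (y o) = y (σ o) := by
  have hσ : ∏ o, (X - C ((y ∘ σ) o)) = ∏ o, (X - C (y o)) := Equiv.prod_comp σ fun o => X - C (y o)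
  obtain ⟨φ, hφ⟩ := exists_algEquiv_of_isTranscendenceBasis
    (isTranscendenceBasis_update_none_of_prod_X_sub_C_eq_sub_C hf hprod h ha)
    (isTranscendenceBasis_update_none_of_prod_X_sub_C_eq_sub_C hf hprod (hσ.trans h) ha)
  have hφt : φ t = t := by simpa using hφ none
  have hφsome (i : ι) : φ (y (some i)) = (y ∘ σ) (some i) := by simpa using hφ (some i)
  have ht : Transcendental K t := by simpa using ha.1.transcendental none
  have hφnone : φ (y none) = (y ∘ σ) none := algHom_apply_none_of_prod_eq_aeval
    (φ : Ω →ₐ[K] Ω) hφt hφsome (prod_eq_aeval_of_prod_X_sub_C_eq_sub_C hprod h)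
    (prod_eq_aeval_of_prod_X_sub_C_eq_sub_C hprod (hσ.trans h))
    (aeval_ne_zero_of_transcendental ht (by rwa [natDegree_sub_C]))
  exact ⟨φ, hφt, fun o => o.rec hφnone hφsome⟩

variable {L : Type*} [Field L] [Algebra K L] [Algebra L Ω] [IsScalarTower K L Ω]

lemma algHom_algebraMap_mem_range_of_adjoin_eq_top {s : Set L}
    (hs : IntermediateField.adjoin K s = ⊤) (φ : Ω →ₐ[K] Ω)
    (hφ : ∀ x ∈ s, φ (algebraMap L Ω x) ∈ (algebraMap L Ω).range) (c : L) :
    φ (algebraMap L Ω c) ∈ (algebraMap L Ω).range := by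
  let j : L →ₐ[K] Ω := IsScalarTower.toAlgHom K L Ω
  have hle : IntermediateField.adjoin K s ≤ j.fieldRange.comap (φ.comp j) :=
    IntermediateField.adjoin_le_iff.2 hφ
  exact hle (hs ▸ IntermediateField.mem_top)

theorem normal_inducedPerms_of_prod_X_sub_C_eq_sub_C [IsAlgClosed Ω] (hf : f.natDegree ≠ 0)
    {t : L} {a : Option ι → L} (hprod : ∏ o, a o = aeval t f)
    (h : ∏ o, (X - C (y o)) = (∏ o, (X - C (a o)) - C (algebraMap K L γ)).map (algebraMap L Ω))
    (htop : IntermediateField.adjoin K (Set.range (Function.update a none t)) = ⊤)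
    (hbasis : IsTranscendenceBasis K (algebraMap L Ω ∘ Function.update a none t)) :
    (inducedPerms L y).Normal := by
  refine normal_inducedPerms_of_forall_exists_ringEquiv fun σ => ?_
  have hprod' : ∏ o, algebraMap L Ω (a o) = aeval (algebraMap L Ω t) f := by
    rw [← map_prod, hprod, aeval_algebraMap_apply]
  have h' : ∏ o, (X - C (y o)) =
      ∏ o, (X - C (algebraMap L Ω (a o))) - C (algebraMap K Ω γ) := by
    simpa [Polynomial.map_prod, ← IsScalarTower.algebraMap_apply] using h
  rw [Function.comp_update] at hbasis
  obtain ⟨φ, hφt, hφy⟩ := exists_algEquiv_apply_eq_perm hf hprod' h' hbasis σ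
  refine ⟨φ.toRingEquiv, hφy,
    algHom_algebraMap_mem_range_of_adjoin_eq_top htop (φ : Ω →ₐ[K] Ω) ?_⟩
  rintro _ ⟨o, rfl⟩
  cases o with
  | none => exact ⟨t, by simpa using hφt.symm⟩
  | some i =>
    obtain ⟨o, ho⟩ := exists_apply_eq_of_prod_X_sub_C_eq_sub_C (φ : Ω →+* Ω) hφy (φ.commutes γ)
      h' (some i)
    exact ⟨a o, by simpa using ho⟩

end Symmetry

section NonSquare

lemma not_isSquare_of_eval_derivative_ne_zero {R : Type*} [CommRing R] [IsReduced R] {p : R[X]}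
    {x : R} (hroot : p.eval x = 0) (hsimple : p.derivative.eval x ≠ 0) : ¬IsSquare p := by
  rintro ⟨q, rfl⟩
  rw [eval_mul, ← sq, pow_eq_zero_iff two_ne_zero] at hroot
  exact hsimple (by simp [derivative_mul, hroot])

variable {F : Type*} [Field F]

lemma exists_pow_eq_and_ne [IsAlgClosed F] {n : ℕ} (hn : (n : F) ≠ 0) (hn1 : n ≠ 1) {c : F}
    (hc : c ≠ 0) (b : F) : ∃ s, s ^ n = c ∧ s ≠ b := by
  have : NeZero (n : F) := ⟨hn⟩
  have hn0 : n ≠ 0 := by rintro rfl; simp at hn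
  obtain ⟨ζ, hζ⟩ := HasEnoughRootsOfUnity.exists_primitiveRoot F n
  obtain ⟨s, hs⟩ := IsAlgClosed.exists_pow_nat_eq c hn0.pos
  by_cases hsb : s = b
  · have hs0 : s ≠ 0 := by
      rintro rfl
      exact hc (by rw [← hs, zero_pow hn0])
    refine ⟨ζ * s, by rw [mul_pow, hζ.pow_eq_one, one_mul, hs], fun h => ?_⟩
    exact hζ.ne_one (by omega) (mul_right_cancel₀ hs0 (by rw [h, one_mul, hsb]))
  · exact ⟨s, hs, hsb⟩

lemma not_isSquare_C_mul_C_mul_pow_add_C {n ℓ : ℕ} (hn : (n : F) ≠ 0) (hn1 : n ≠ 1)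
    (hℓ : (ℓ : F) ≠ 0) {a b c d e : F} (ha : a ≠ 0) (hc : c ≠ 0) (hd : d ≠ 0) (he : e ≠ 0) :
    ¬IsSquare (C c * (C d * (C a * X ^ ℓ + C b) ^ n + C e)) := by
  wlog hF : IsAlgClosed F generalizing F
  · let j := algebraMap F (AlgebraicClosure F)
    intro hsq
    have hmap := hsq.map (mapRingHom j)
    simp only [coe_mapRingHom, Polynomial.map_mul, Polynomial.map_add, Polynomial.map_pow, map_C,
      map_X] at hmap
    refine this ?_ ?_ ?_ ?_ ?_ ?_ inferInstance hmap
    all_goals first | rwa [_root_.map_ne_zero] | rwa [← map_natCast j, _root_.map_ne_zero]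
  -- The roots `x` with `a x ^ ℓ + b = s` are simple unless `x = 0`, which `s ≠ b` excludes.
  obtain ⟨s, hs, hsb⟩ := exists_pow_eq_and_ne hn hn1 (div_ne_zero (neg_ne_zero.2 he) hd) b
  have hℓ0 : ℓ ≠ 0 := by rintro rfl; simp at hℓ
  have hn0 : n ≠ 0 := by rintro rfl; simp at hn
  obtain ⟨x, hx⟩ := IsAlgClosed.exists_pow_nat_eq ((s - b) / a) hℓ0.pos
  have hx0 : x ≠ 0 := by
    rintro rfl
    rw [zero_pow hℓ0] at hx
    exact div_ne_zero (sub_ne_zero.2 hsb) ha hx.symm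
  have hs0 : s ≠ 0 := by
    rintro rfl
    rw [zero_pow hn0] at hs
    exact div_ne_zero (neg_ne_zero.2 he) hd hs.symm
  have hinner : a * x ^ ℓ + b = s := by rw [hx, mul_div_cancel₀ _ ha, sub_add_cancel]
  refine not_isSquare_of_eval_derivative_ne_zero (x := x) ?_ ?_
  · simp [hinner, hs, mul_div_cancel₀ _ hd]
  · simp [derivative_pow, hinner, ha, hc, hd, hn, hℓ, hx0, hs0]

lemma isSquare_of_isSquare_algebraMap {R L : Type*} [CommRing R] [IsIntegrallyClosed R] [Field L]
    [Algebra R L] [IsFractionRing R L] {d : R} (hd : IsSquare (algebraMap R L d)) :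
    IsSquare d := by
  obtain ⟨s, hs⟩ := hd
  obtain ⟨r, rfl⟩ := IsIntegrallyClosed.exists_algebraMap_eq_of_isIntegral_pow (R := R) two_pos
    (sq s ▸ hs ▸ isIntegral_algebraMap)
  exact ⟨r, IsFractionRing.injective R L (by rw [hs, map_mul])⟩

end NonSquare

section IntegralModel

lemma prod_X_sub_C_mul {F κ : Type*} [Field F] [Fintype κ] {s : F} (hs : s ≠ 0) (a : κ → F) :
    ∏ o, (X - C (s * a o)) = C (s ^ Fintype.card κ) * (∏ o, (X - C (a o))).comp (C s⁻¹ * X) := by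
  rw [prod_comp, C_pow, ← Finset.card_univ, ← Finset.prod_const, ← Finset.prod_mul_distrib]
  refine Finset.prod_congr rfl fun o _ => ?_
  rw [sub_comp, X_comp, C_comp, mul_sub, ← mul_assoc, ← C_mul, mul_inv_cancel₀ hs, C_1, one_mul,
    C_mul]

lemma prod_X_sub_C_mul_eq_sub_C {F κ : Type*} [Field F] [Fintype κ] {a y : κ → F} {c s : F}
    (hs : s ≠ 0) (h : ∏ o, (X - C (y o)) = ∏ o, (X - C (a o)) - C c) :
    ∏ o, (X - C (s * y o)) = ∏ o, (X - C (s * a o)) - C (s ^ Fintype.card κ * c) := by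
  rw [prod_X_sub_C_mul hs, prod_X_sub_C_mul hs, h, sub_comp, C_comp, mul_sub, C_mul]

variable {R ι : Type*} [CommRing R] [Fintype ι]

/-- Over `R[t_i, t]`, the monic polynomial `∏ᵢ (x - T t_i) * (x - f(t)) - γ T ^ n` where
`T = ∏ᵢ t_i` and `n` is its degree. Its roots are `T` times the roots of
`∏ᵢ (x - t_i) * (x - f(t) / T) - γ`, which has denominators. -/
noncomputable def integralModel (ι : Type*) [Fintype ι] (f : R[X]) (γ : R) :
    (MvPolynomial (Option ι) R)[X] :=
  (X - C (aeval (MvPolynomial.X none) f)) *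
      ∏ i : ι, (X - C ((∏ j : ι, MvPolynomial.X (some j)) * MvPolynomial.X (some i))) -
    C ((∏ j : ι, MvPolynomial.X (some j)) ^ Fintype.card (Option ι) * MvPolynomial.C γ)

/-- The specialization `R[t_i, t] → R[t]` that sends every `t_i` to `1`. -/
noncomputable def specializeSomeOne (R ι : Type*) [CommRing R] :
    MvPolynomial (Option ι) R →ₐ[R] R[X] :=
  MvPolynomial.aeval fun o => o.elim X 1

lemma monic_integralModel (f : R[X]) (γ : R) : (integralModel ι f γ).Monic := by
  nontriviality R
  have hprod : (∏ i : ι, (X - C ((∏ j : ι, MvPolynomial.X (some j)) *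
      MvPolynomial.X (some i) : MvPolynomial (Option ι) R))).Monic :=
    monic_prod_of_monic _ _ fun i _ => monic_X_sub_C _
  refine ((monic_X_sub_C _).mul hprod).sub_of_left (degree_C_le.trans_lt ?_)
  rw [← natDegree_pos_iff_degree_pos, (monic_X_sub_C _).natDegree_mul hprod, natDegree_X_sub_C]
  omega

lemma map_specializeSomeOne_integralModel (f : R[X]) (γ : R) :
    (integralModel ι f γ).map (specializeSomeOne R ι).toRingHom =
      (X - C 1) ^ Fintype.card ι * (X - C f) - C (C γ) := by
  simp [integralModel, specializeSomeOne, Polynomial.map_prod, ← aeval_algHom_apply, mul_comm]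

theorem not_isSquare_discr_integralModel {K : Type*} [Field K] {ℓ : ℕ} {α β γ : K}
    (hcard : (Fintype.card ι : K) ≠ 0) (hcard' : (Fintype.card (Option ι) : K) ≠ 0)
    (hℓ : (ℓ : K) ≠ 0) (hα : α ≠ 0) (hγ : γ ≠ 0) :
    ¬IsSquare (integralModel ι (C α * X ^ ℓ + C β) γ).discr := by
  intro hsq
  obtain ⟨k, hk⟩ : ∃ k, Fintype.card ι = k + 1 :=
    Nat.exists_eq_succ_of_ne_zero fun h => hcard (by rw [h, Nat.cast_zero])
  rw [hk] at hcard
  have hk2 : (k : K) + 2 ≠ 0 := by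
    simpa [hk, add_assoc, one_add_one_eq_two] using hcard'
  have hunit : IsUnit ((k : K[X]) + 2) := by
    simpa [map_ofNat] using isUnit_C.2 hk2.isUnit
  have hspec := hsq.map (specializeSomeOne K ι).toRingHom
  rw [← discr_map_of_monic (monic_integralModel _ _), map_specializeSomeOne_integralModel, hk,
    discr_X_sub_C_pow_mul_X_sub_C_sub_C _ _ hunit] at hspec
  refine not_isSquare_C_mul_C_mul_pow_add_C (n := k + 2) (ℓ := ℓ) (a := α) (b := β - 1)
    (c := (-1) ^ ((k + 1) * k / 2) * γ ^ k) (d := (k + 1) ^ (k + 1))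
    (e := (k + 2) ^ (k + 2) * γ) (by simpa) (by omega) hℓ hα ?_ ?_ ?_ ?_
  · simp [hγ]
  · simpa using hcard
  · simp [hγ, hk2]
  · simpa [add_sub_assoc, map_ofNat] using hspec

end IntegralModel

section GenericPoly

open Equiv

lemma exists_eq_prod_X_sub_C {F κ : Type*} [Field F] [Fintype κ] {p : F[X]} (hp : p.Monic)
    (hsplits : p.Splits) (hdeg : p.natDegree = Fintype.card κ) :
    ∃ y : κ → F, p = ∏ o, (X - C (y o)) := by
  classical
  have hcard : Fintype.card κ = Fintype.card p.roots := by
    rw [Multiset.card_coe, ← hsplits.natDegree_eq_card_roots, hdeg]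
  let e : κ ≃ p.roots := Fintype.equivOfCardEq hcard
  refine ⟨fun o => e o, ?_⟩
  calc p = (p.roots.map fun x => X - C x).prod := hsplits.eq_prod_roots_of_monic hp
    _ = ∏ x : p.roots, (X - C x.1) := by rw [← Multiset.map_univ]; rfl
    _ = ∏ o, (X - C (e o).1) := (e.prod_comp fun x => X - C x.1).symm

lemma algebraMap_mvPolynomial_C {R A σ : Type*} [CommSemiring R] [Semiring A] [Algebra R A]
    [Algebra (MvPolynomial σ R) A] [IsScalarTower R (MvPolynomial σ R) A] (r : R) :
    algebraMap (MvPolynomial σ R) A (MvPolynomial.C r) = algebraMap R A r :=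
  (IsScalarTower.algebraMap_apply R (MvPolynomial σ R) A r).symm

variable {K ι L : Type*} [Field K] [Field L] [Algebra (MvPolynomial (Option ι) K) L]

/-- The variable `t_i` (for `o = some i`) or `t` (for `o = none`), as an element of the rational
function field `L = K(t_i, t)`. -/
noncomputable def genericVar (K ι L : Type*) [Field K] [Field L]
    [Algebra (MvPolynomial (Option ι) K) L] (o : Option ι) : L :=
  algebraMap (MvPolynomial (Option ι) K) L (MvPolynomial.X o)

section Variables

variable [IsFractionRing (MvPolynomial (Option ι) K) L]

lemma genericVar_ne_zero (o : Option ι) : genericVar K ι L o ≠ 0 := by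
  simp [genericVar]

lemma prod_genericVar_some_ne_zero [Fintype ι] : ∏ i : ι, genericVar K ι L (some i) ≠ 0 :=
  Finset.prod_ne_zero_iff.2 fun i _ => genericVar_ne_zero (some i)

variable [Algebra K L] [IsScalarTower K (MvPolynomial (Option ι) K) L]

lemma adjoin_range_genericVar : IntermediateField.adjoin K (Set.range (genericVar K ι L)) = ⊤ := by
  have hrange : (IsScalarTower.toAlgHom K (MvPolynomial (Option ι) K) L).range =
      Algebra.adjoin K (Set.range (genericVar K ι L)) := by
    rw [Algebra.adjoin_range_eq_range_aeval]
    congr 1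
    ext o
    simp [genericVar]
  rw [← IsFractionRing.algHom_fieldRange_eq_of_comp_eq_of_range_eq (f := AlgHom.id K L) rfl hrange]
  exact AlgHom.fieldRange_eq_top.2 Function.surjective_id

lemma isTranscendenceBasis_genericVar : IsTranscendenceBasis K (genericVar K ι L) := by
  have : Algebra.IsAlgebraic (MvPolynomial (Option ι) K) L :=
    IsLocalization.isAlgebraic _ (nonZeroDivisors _)
  exact (IsTranscendenceBasis.mvPolynomial (Option ι) K).algebraMap_comp

end Variables

variable [Algebra K L] [Fintype ι] [DecidableEq ι] {Ω : Type*} [Field Ω] [Algebra L Ω]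
  {y : Option ι → Ω} {f : K[X]} {γ : K}

/-- The elements `t_i` and `f(t) / ∏ᵢ t_i` of `L = K(t_i, t)`, whose product is `f(t)`. -/
noncomputable def genericRoots (ι : Type*) [Fintype ι] [DecidableEq ι] (f : K[X]) (L : Type*)
    [Field L] [Algebra K L] [Algebra (MvPolynomial (Option ι) K) L] : Option ι → L :=
  Function.update (genericVar K ι L) none
    (aeval (genericVar K ι L none) f / ∏ i : ι, genericVar K ι L (some i))

/-- The polynomial `∏ᵢ (x - t_i) * (x - f(t) / ∏ᵢ t_i) - γ` over `L = K(t_i, t)`. -/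
noncomputable def genericPoly (ι : Type*) [Fintype ι] [DecidableEq ι] (f : K[X]) (γ : K)
    (L : Type*) [Field L] [Algebra K L] [Algebra (MvPolynomial (Option ι) K) L] : L[X] :=
  ∏ o : Option ι, (X - C (genericRoots ι f L o)) - C (algebraMap K L γ)

lemma exists_map_genericPoly_eq_prod_X_sub_C [IsAlgClosed Ω] :
    ∃ y : Option ι → Ω, (genericPoly ι f γ L).map (algebraMap L Ω) = ∏ o, (X - C (y o)) := by
  have hprod : (∏ o, (X - C (genericRoots ι f L o))).Monic :=
    monic_prod_of_monic _ _ fun o _ => monic_X_sub_C _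
  have hdeg : (∏ o : Option ι, (X - C (genericRoots ι f L o))).natDegree =
      Fintype.card (Option ι) := by
    rw [natDegree_prod_of_monic _ _ fun o _ => monic_X_sub_C _]; simp
  have hmonic : (genericPoly ι f γ L).Monic := hprod.sub_of_left <| degree_C_le.trans_lt <|
    natDegree_pos_iff_degree_pos.1 (hdeg ▸ Fintype.card_pos)
  refine exists_eq_prod_X_sub_C (hmonic.map _) (IsAlgClosed.splits _) ?_
  rw [natDegree_map, genericPoly, natDegree_sub_C, hdeg]

variable [IsScalarTower K (MvPolynomial (Option ι) K) L]
  [IsFractionRing (MvPolynomial (Option ι) K) L]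

lemma normal_inducedPerms_of_map_genericPoly_eq [IsAlgClosed Ω] [Algebra.IsAlgebraic L Ω]
    (hf : f.natDegree ≠ 0)
    (hy : (genericPoly ι f γ L).map (algebraMap L Ω) = ∏ o, (X - C (y o))) :
    (inducedPerms L y).Normal := by
  let : Algebra K Ω := Algebra.compHom Ω (algebraMap K L)
  have : IsScalarTower K L Ω := .of_algebraMap_eq fun _ => rfl
  have hupdate : Function.update (genericRoots ι f L) none (genericVar K ι L none) =
      genericVar K ι L := by
    rw [genericRoots, Function.update_idem, Function.update_eq_self]
  have hprod : ∏ o, genericRoots ι f L o = aeval (genericVar K ι L none) f := by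
    simp [genericRoots, Fintype.prod_option, prod_genericVar_some_ne_zero]
  refine normal_inducedPerms_of_prod_X_sub_C_eq_sub_C hf hprod hy.symm ?_ ?_
  · rw [hupdate, adjoin_range_genericVar]
  · rw [hupdate]
    exact isTranscendenceBasis_genericVar.algebraMap_comp

lemma map_integralModel : (integralModel ι f γ).map (algebraMap _ L) =
    ∏ o, (X - C ((∏ i, genericVar K ι L (some i)) * genericRoots ι f L o)) -
      C ((∏ i, genericVar K ι L (some i)) ^ Fintype.card (Option ι) * algebraMap K L γ) := by
  have hnone : (∏ i, genericVar K ι L (some i)) * genericRoots ι f L none =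
      aeval (genericVar K ι L none) f := by
    rw [genericRoots, Function.update_self, mul_div_cancel₀ _ prod_genericVar_some_ne_zero]
  rw [Fintype.prod_option, hnone]
  simp [integralModel, genericRoots, genericVar, Polynomial.map_prod, algebraMap_mvPolynomial_C,
    aeval_algebraMap_apply]

lemma map_integralModel_eq_prod_X_sub_C
    (hy : (genericPoly ι f γ L).map (algebraMap L Ω) = ∏ o, (X - C (y o))) :
    ((integralModel ι f γ).map (algebraMap _ L)).map (algebraMap L Ω) =
      ∏ o, (X - C (algebraMap L Ω (∏ i, genericVar K ι L (some i)) * y o)) := by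
  have hy' : ∏ o, (X - C (y o)) = ∏ o, (X - C (algebraMap L Ω (genericRoots ι f L o))) -
      C (algebraMap L Ω (algebraMap K L γ)) := by
    simpa only [genericPoly, Polynomial.map_sub, Polynomial.map_prod, map_X, map_C] using hy.symm
  rw [map_integralModel, prod_X_sub_C_mul_eq_sub_C
    ((_root_.map_ne_zero _).2 prod_genericVar_some_ne_zero) hy']
  simp only [Polynomial.map_sub, Polynomial.map_prod, Polynomial.map_mul,
    Polynomial.map_pow, map_X, map_C, C_mul, C_pow]

lemma two_ne_zero_of_natCast_ne_zero {R : Type*} [Semiring R] {n : ℕ} (hn : (n : R) ≠ 0)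
    (hn' : ((n + 1 : ℕ) : R) ≠ 0) : (2 : R) ≠ 0 := by
  intro h2
  have heven {m : ℕ} (hm : Even m) : (m : R) = 0 := by
    obtain ⟨k, rfl⟩ := hm
    rw [← two_mul, Nat.cast_mul, Nat.cast_two, h2, zero_mul]
  rcases n.even_or_odd with h | h
  · exact hn (heven h)
  · exact hn' (heven h.add_one)

theorem genericPoly_separable_and_nonempty_gal_mulEquiv {ℓ : ℕ} {α β γ : K}
    (hcard : (Fintype.card ι : K) ≠ 0) (hcard' : (Fintype.card (Option ι) : K) ≠ 0)
    (hℓ : (ℓ : K) ≠ 0) (hα : α ≠ 0) (hγ : γ ≠ 0) :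
    (genericPoly ι (C α * X ^ ℓ + C β) γ L).Separable ∧
      Nonempty ((genericPoly ι (C α * X ^ ℓ + C β) γ L).Gal ≃* Perm (Option ι)) := by
  obtain ⟨y, hy⟩ := exists_map_genericPoly_eq_prod_X_sub_C (Ω := AlgebraicClosure L)
    (L := L) (ι := ι) (f := C α * X ^ ℓ + C β) (γ := γ)
  have hf : (C α * X ^ ℓ + C β).natDegree ≠ 0 := by
    rw [natDegree_add_C, natDegree_C_mul_X_pow _ _ hα]
    rintro rfl
    exact hℓ Nat.cast_zero
  have := normal_inducedPerms_of_map_genericPoly_eq hf hy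
  have h2 : (2 : L) ≠ 0 := by
    have h2K := two_ne_zero_of_natCast_ne_zero hcard (Fintype.card_option (α := ι) ▸ hcard')
    rwa [← map_ofNat (algebraMap K L), _root_.map_ne_zero]
  have hdiscr : ¬IsSquare
      ((integralModel ι (C α * X ^ ℓ + C β) γ).map (algebraMap _ L)).discr := by
    rw [discr_map_of_monic (monic_integralModel _ _)]
    exact fun hsq => not_isSquare_discr_integralModel hcard hcard' hℓ hα hγ
      (isSquare_of_isSquare_algebraMap hsq)
  have hinj : Function.Injective y := .of_comp
    (injective_of_discr_ne_zero (map_integralModel_eq_prod_X_sub_C hy) fun h => hdiscr (h ▸ .zero))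
  obtain ⟨ρ, hρ, hsign⟩ := exists_mem_inducedPerms_sign_ne_one h2
    (map_integralModel_eq_prod_X_sub_C hy) hdiscr
  rw [inducedPerms_mul_algebraMap y prod_genericVar_some_ne_zero] at hρ
  refine ⟨?_, nonempty_gal_mulEquiv_perm hinj hy (normal_eq_top_of_sign_ne_one hρ hsign)⟩
  rw [← separable_map (algebraMap L (AlgebraicClosure L)), hy]
  exact separable_prod_X_sub_C_iff.2 hinj

end GenericPoly

lemma auxPoly_eq_genericPoly (K : Type*) [Field K] (n ℓ : ℕ) (α β γ : K) :
    auxPoly K n ℓ α β γ = genericPoly (Fin (n - 1)) (C α * X ^ ℓ + C β) γ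
      (FractionRing (MvPolynomial (Option (Fin (n - 1))) K)) := by
  simp only [auxPoly, genericPoly, genericRoots, genericVar, Fintype.prod_option, ne_eq,
    Function.update_self, Function.update_of_ne, reduceCtorEq, not_false_eq_true, map_add, map_mul,
    map_pow, aeval_C, aeval_X, algebraMap_mvPolynomial_C]
  rw [mul_comm]

theorem aux_poly_galois_Sn_general (K : Type*) [Field K] (n ℓ : ℕ) (hn : (n : K) ≠ 0)
    (hn1 : (n : K) ≠ 1) (hℓ : (ℓ : K) ≠ 0) (α β γ : K) (hα : α ≠ 0) (hγ : γ ≠ 0) :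
    (auxPoly K n ℓ α β γ).Separable ∧
      Nonempty ((auxPoly K n ℓ α β γ).Gal ≃* Equiv.Perm (Fin n)) := by
  have hn0 : n - 1 + 1 = n := Nat.sub_add_cancel <| Nat.pos_of_ne_zero <| by
    rintro rfl
    exact hn Nat.cast_zero
  have hcard' : Fintype.card (Option (Fin (n - 1))) = n := by
    rw [Fintype.card_option, Fintype.card_fin, hn0]
  have hcard : (Fintype.card (Fin (n - 1)) : K) ≠ 0 := by
    rw [Fintype.card_fin]
    intro h
    exact hn1 (by rw [← hn0, Nat.cast_add, h, zero_add, Nat.cast_one])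
  obtain ⟨hsep, ⟨e⟩⟩ := genericPoly_separable_and_nonempty_gal_mulEquiv (β := β)
    (L := FractionRing (MvPolynomial (Option (Fin (n - 1))) K)) hcard (by rwa [hcard']) hℓ hα hγ
  rw [auxPoly_eq_genericPoly]
  exact ⟨hsep, ⟨e.trans (Fintype.equivFinOfCardEq hcard').permCongrHom⟩⟩

/-- **Proposition 5.4.**  Let `K` have characteristic `0`, `n ≥ 4`, `ℓ ≥ 1`,
`α, γ ∈ K^*`, `β ∈ K`.  Then the polynomial
`(x−t_1)⋯(x−t_{n-1})·(x − (α t^ℓ + β)/(t_1⋯t_{n-1})) − γ` is separable over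
`K(t_1,…,t_{n-1},t)` and its Galois group is isomorphic to `S_n`. -/
theorem aux_poly_galois_Sn (K : Type*) [Field K] [CharZero K]
    (n ℓ : ℕ) (hn : 4 ≤ n) (hℓ : 1 ≤ ℓ)
    (α β γ : K) (hα : α ≠ 0) (hγ : γ ≠ 0) :
    (auxPoly K n ℓ α β γ).Separable ∧
      Nonempty ((auxPoly K n ℓ α β γ).Gal ≃* Equiv.Perm (Fin n)) := by
  exact aux_poly_galois_Sn_general K n ℓ (by norm_cast; omega) (by norm_cast; omega)
    (by norm_cast; omega) α β γ hα hγ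
end

section
/- Let K be a field of characteristic 0, let n ≥ 2 be an integer, let β ∈ K and let γ be a nonzero element of K such that (n−1)^{n−1}(β−1)^n + n^n·γ ≠ 0. Then the polynomial (x−t_1)⋯(x−t_{n-1})·(x − β·t_1^{−1}⋯t_{n-1}^{−1}) − γ, viewed as a polynomial in x over the rational function field K(t_1,…,t_{n-1}), is separable. -/
open Polynomial

/-- The polynomial `(x−t_1)⋯(x−t_{n-1})·(x − β·t_1^{-1}⋯t_{n-1}^{-1}) − γ` over the
rational function field `K(t_1,…,t_{n-1})`. -/
noncomputable def auxPoly' (K : Type*) [Field K] (n : ℕ) (β γ : K) :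
    Polynomial (FractionRing (MvPolynomial (Fin (n - 1)) K)) :=
  (∏ i : Fin (n - 1), (X - C (algebraMap (MvPolynomial (Fin (n - 1)) K)
      (FractionRing (MvPolynomial (Fin (n - 1)) K)) (MvPolynomial.X i)))) *
    (X - C (algebraMap (MvPolynomial (Fin (n - 1)) K)
        (FractionRing (MvPolynomial (Fin (n - 1)) K)) (MvPolynomial.C β) *
      (∏ i : Fin (n - 1), algebraMap (MvPolynomial (Fin (n - 1)) K)
        (FractionRing (MvPolynomial (Fin (n - 1)) K)) (MvPolynomial.X i))⁻¹)) -
    C (algebraMap (MvPolynomial (Fin (n - 1)) K)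
      (FractionRing (MvPolynomial (Fin (n - 1)) K)) (MvPolynomial.C γ))

/-!
Clear the denominator `t₁⋯tₙ₋₁`. The resultant of the cleared polynomial with its derivative lies in
`K[t₁, …, tₙ₋₁]`, so it is nonzero as soon as it is nonzero at one point where the leading
coefficient `t₁⋯tₙ₋₁` does not vanish. At `t₁ = ⋯ = tₙ₋₁ = 1` the polynomial becomes
`(x - 1)ⁿ⁻¹ (x - β) - γ`; a double root `x` satisfies `x ≠ 1` because `γ ≠ 0`, so that
`n (x - 1) = (n - 1) (β - 1)` and `n (x - β) = -(β - 1)`, and substituting these into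
`nⁿ (x - 1)ⁿ⁻¹ (x - β) = nⁿ γ` gives `(n - 1)ⁿ⁻¹ (β - 1)ⁿ + nⁿ γ = 0`.
-/

section Specialization

variable {A B L : Type*} [CommRing A] [CommRing B] [IsDomain B] [Field L]

theorem resultant_ne_zero_of_isCoprime_map (φ : A →+* B) {p q : A[X]}
    (hp : φ p.leadingCoeff ≠ 0) (h : IsCoprime (p.map φ) (q.map φ)) : resultant p q ≠ 0 := by
  intro hres
  have hdeg : (p.map φ).natDegree = p.natDegree := natDegree_map_of_leadingCoeff_ne_zero φ hp
  -- The degree of `q` may drop under `φ`; this only contributes a power of `φ p.leadingCoeff`.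
  obtain ⟨d, hd⟩ := Nat.exists_eq_add_of_le (natDegree_map_le (p := q) (f := φ))
  have hprod : φ p.leadingCoeff ^ d * resultant (p.map φ) (q.map φ) = 0 := by
    calc φ p.leadingCoeff ^ d * resultant (p.map φ) (q.map φ)
        = resultant (p.map φ) (q.map φ) p.natDegree q.natDegree := by
          rw [hd, resultant_add_right_deg _ _ _ _ _ le_rfl, coeff_map, hdeg, leadingCoeff]
      _ = 0 := by rw [resultant_map_map, hres, map_zero]
  exact mul_ne_zero (pow_ne_zero d hp) (resultant_ne_zero _ _ h) hprod

theorem isCoprime_map_of_resultant_ne_zero {ι : A →+* L} (hι : Function.Injective ι) {p q : A[X]}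
    (hp : p ≠ 0) (h : resultant p q ≠ 0) : IsCoprime (p.map ι) (q.map ι) := by
  have hres : resultant (p.map ι) (q.map ι) ≠ 0 := by
    rw [natDegree_map_eq_of_injective hι, natDegree_map_eq_of_injective hι, resultant_map_map]
    exact (map_ne_zero_iff ι hι).mpr h
  by_contra hcop
  exact hres (resultant_eq_zero_iff.mpr ⟨.inl ((Polynomial.map_ne_zero_iff hι).mpr hp), hcop⟩)

theorem separable_map_of_separable_map (φ : A →+* B) {ι : A →+* L} (hι : Function.Injective ι)
    {p : A[X]} (hp : φ p.leadingCoeff ≠ 0) (h : (p.map φ).Separable) : (p.map ι).Separable := by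
  have hp₀ : p ≠ 0 := by
    rintro rfl
    simp at hp
  rw [Separable, derivative_map] at h ⊢
  exact isCoprime_map_of_resultant_ne_zero hι hp₀ (resultant_ne_zero_of_isCoprime_map φ hp h)

end Specialization

theorem pow_mul_add_pow_mul_eq_zero_of_double_root {R : Type*} [CommRing R] [IsDomain R]
    {m : ℕ} {a b c x : R} (hc : c ≠ 0) (hx : (x - a) ^ m * (x - b) = c)
    (hx' : m * (x - a) ^ (m - 1) * (x - b) + (x - a) ^ m = 0) :
    (m : R) ^ m * (b - a) ^ (m + 1) + (m + 1 : R) ^ (m + 1) * c = 0 := by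
  have hpow : (x - a) ^ m ≠ 0 := left_ne_zero_of_mul (hx ▸ hc)
  have hlin : m * (x - b) + (x - a) = 0 := by
    refine (mul_eq_zero.mp ?_).resolve_left hpow
    cases m with
    | zero => simp at hx'
    | succ j =>
      rw [Nat.add_sub_cancel] at hx'
      linear_combination (x - a) * hx'
  have hxa : (m + 1) * (x - a) = m * (b - a) := by linear_combination hlin
  have hxb : (m + 1) * (x - b) = -(b - a) := by linear_combination hlin
  have hsubst : (m + 1 : R) ^ (m + 1) * c = -(m ^ m * (b - a) ^ (m + 1)) := by
    calc (m + 1 : R) ^ (m + 1) * c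
        = ((m + 1) * (x - a)) ^ m * ((m + 1) * (x - b)) := by rw [← hx, mul_pow]; ring
      _ = -(m ^ m * (b - a) ^ (m + 1)) := by rw [hxa, hxb, mul_pow]; ring
  rw [hsubst, add_neg_cancel]

theorem separable_X_sub_C_pow_mul_X_sub_C_sub_C {K : Type*} [Field K] {m : ℕ} {a b c : K}
    (hc : c ≠ 0) (h : (m : K) ^ m * (b - a) ^ (m + 1) + (m + 1 : K) ^ (m + 1) * c ≠ 0) :
    ((X - C a) ^ m * (X - C b) - C c).Separable := by
  let ι := algebraMap K (AlgebraicClosure K)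
  refine (isCoprime_iff_aeval_ne_zero_of_isAlgClosed K (AlgebraicClosure K) _ _).mpr fun x ↦ ?_
  by_contra! hx
  have hroot : (x - ι a) ^ m * (x - ι b) = ι c := by
    simpa [ι, sub_eq_zero] using hx.1
  have hroot' : m * (x - ι a) ^ (m - 1) * (x - ι b) + (x - ι a) ^ m = 0 := by
    simpa [ι, derivative_pow] using hx.2
  have hzero := pow_mul_add_pow_mul_eq_zero_of_double_root
    ((map_ne_zero ι).mpr hc) hroot hroot'
  exact h (ι.injective (by simpa using hzero))

section Numerator

variable {σ A B : Type*} [Fintype σ] [CommRing A] [CommRing B]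

/-- The polynomial `∏ (x - t i) * (x - b * (∏ t i)⁻¹) - c` multiplied by `∏ t i`. Clearing the
denominator makes sense of it over any commutative ring, so that `t` can be specialized. -/
noncomputable def auxNumerator (t : σ → A) (b c : A) : A[X] :=
  (∏ i, (X - C (t i))) * (C (∏ i, t i) * X - C b) - C ((∏ i, t i) * c)

theorem map_auxNumerator (f : A →+* B) (t : σ → A) (b c : A) :
    (auxNumerator t b c).map f = auxNumerator (f ∘ t) (f b) (f c) := by
  simp [auxNumerator, Polynomial.map_prod]

theorem auxNumerator_one (b c : A) :
    auxNumerator (1 : σ → A) b c = (X - C 1) ^ Fintype.card σ * (X - C b) - C c := by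
  simp [auxNumerator]

theorem auxNumerator_eq_C_mul {L : Type*} [Field L] {t : σ → L} (ht : ∏ i, t i ≠ 0) (b c : L) :
    auxNumerator t b c = C (∏ i, t i) *
      ((∏ i, (X - C (t i))) * (X - C (b * (∏ i, t i)⁻¹)) - C c) := by
  have hb : C (∏ i, t i) * C (b * (∏ i, t i)⁻¹) = C b := by
    rw [← C_mul, mul_left_comm, mul_inv_cancel₀ ht, mul_one]
  rw [auxNumerator, C_mul]
  linear_combination (∏ i, (X - C (t i))) * hb

theorem leadingCoeff_auxNumerator {t : σ → A} (ht : ∏ i, t i ≠ 0) (b c : A) :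
    (auxNumerator t b c).leadingCoeff = ∏ i, t i := by
  have hmonic : (∏ i, (X - C (t i))).Monic := monic_prod_X_sub_C t _
  have hdeg : (C (∏ i, t i) * X - C b).degree = 1 := by
    rw [sub_eq_add_neg, ← C_neg, degree_linear ht]
  have hlead : (C (∏ i, t i) * X - C b).leadingCoeff = ∏ i, t i := by
    rw [sub_eq_add_neg, ← C_neg, leadingCoeff_linear ht]
  rw [auxNumerator, leadingCoeff_sub_of_degree_lt, leadingCoeff_monic_mul hmonic, hlead]
  have : Nontrivial A := ⟨_, _, ht⟩
  refine degree_C_le.trans_lt ?_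
  rw [mul_comm, hmonic.degree_mul, hdeg, degree_eq_natDegree hmonic.ne_zero]
  exact_mod_cast Nat.add_pos_left one_pos _

theorem separable_map_auxNumerator [IsDomain B] {L : Type*} [Field L] (φ : A →+* B)
    {ι : A →+* L} (hι : Function.Injective ι) {t : σ → A} (ht : ∀ i, φ (t i) = 1) {b c : A}
    (h : ((X - C 1) ^ Fintype.card σ * (X - C (φ b)) - C (φ c)).Separable) :
    ((auxNumerator t b c).map ι).Separable := by
  have hφ : φ (∏ i, t i) = 1 := by simp [ht]
  have hprod : ∏ i, t i ≠ 0 := by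
    intro h0
    simp [h0] at hφ
  refine separable_map_of_separable_map φ hι ?_ ?_
  · rw [leadingCoeff_auxNumerator hprod, hφ]
    exact one_ne_zero
  · rwa [map_auxNumerator, show φ ∘ t = 1 from funext ht, auxNumerator_one]

end Numerator

theorem aux_poly_separable_general (K : Type*) [Field K] (n : ℕ) (hn : 1 ≤ n) (β γ : K)
    (hγ : γ ≠ 0) (h : ((n : K) - 1) ^ (n - 1) * (β - 1) ^ n + (n : K) ^ n * γ ≠ 0) :
    (auxPoly' K n β γ).Separable := by
  obtain ⟨m, rfl⟩ := Nat.exists_eq_add_of_le' hn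
  let ι := algebraMap (MvPolynomial (Fin m) K) (FractionRing (MvPolynomial (Fin m) K))
  have hι : Function.Injective ι := IsFractionRing.injective _ _
  have hprod : ∏ i, (ι ∘ MvPolynomial.X) i ≠ 0 :=
    Finset.prod_ne_zero_iff.mpr fun i _ ↦ (map_ne_zero_iff ι hι).mpr (MvPolynomial.X_ne_zero i)
  have hnum : ((auxNumerator MvPolynomial.X (.C β) (.C γ)).map ι).Separable := by
    refine separable_map_auxNumerator (MvPolynomial.eval 1) hι (by simp) ?_
    simp only [MvPolynomial.eval_C, Fintype.card_fin]
    exact separable_X_sub_C_pow_mul_X_sub_C_sub_C hγ (by simpa using h)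
  rw [map_auxNumerator, auxNumerator_eq_C_mul hprod] at hnum
  exact hnum.of_mul_right

/-- **Proposition 5.5.**  Let `K` have characteristic `0`, `n ≥ 2`, `β ∈ K` and
`γ ∈ K^*` with `(n−1)^{n−1}(β−1)^n + n^n·γ ≠ 0`.  Then the polynomial
`(x−t_1)⋯(x−t_{n-1})·(x − β·t_1^{-1}⋯t_{n-1}^{-1}) − γ` is separable over
`K(t_1,…,t_{n-1})`. -/
theorem aux_poly_separable (K : Type*) [Field K] [CharZero K]
    (n : ℕ) (hn : 2 ≤ n) (β γ : K) (hγ : γ ≠ 0)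
    (h : ((n : K) - 1) ^ (n - 1) * (β - 1) ^ n + (n : K) ^ n * γ ≠ 0) :
    (auxPoly' K n β γ).Separable :=
  aux_poly_separable_general K n (by lia) β γ hγ h
end

section
/- For every integer ℓ ≥ 1, the polynomial (x²−1)(x + t^ℓ − 1) − 1, viewed as a polynomial in x over the rational function field ℚ(t), is irreducible over ℚ(t) and its Galois group over ℚ(t) is isomorphic to the symmetric group S_3; moreover its specialization at t = 0, namely (x²−1)(x−1) − 1 ∈ ℚ[x], is separable. -/
open Polynomial

/-!
An irreducible cubic has Galois group `S₃` as soon as its discriminant is not a square: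
the order of the group is then divisible by both `3` and `2`. Over the fraction field of an
integrally closed domain, both conditions can be checked after specialization. At `t = 1` the
polynomial becomes `x³ - x - 1`, which is irreducible over `ℚ` (Selmer) and has discriminant `-23`,
negative and so not a square. At `t = 0` the discriminant is `5 ≠ 0`.
-/

section Gal

variable {F : Type*} [Field F]

theorem two_dvd_finrank_of_isSquare_algebraMap {L : Type*} [Field L] [Algebra F L] {d : F}
    (hd : ¬ IsSquare d) (hdL : IsSquare (algebraMap F L d)) : 2 ∣ Module.finrank F L := by
  obtain ⟨δ, hδ⟩ := hdL
  have hmonic : (X ^ 2 - C d).Monic := monic_X_pow_sub_C d two_ne_zero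
  have hroot : aeval δ (X ^ 2 - C d) = 0 := by simp [hδ, sq]
  have hirr : Irreducible (X ^ 2 - C d) :=
    X_pow_sub_C_irreducible_of_prime Nat.prime_two fun b hb ↦ hd ⟨b, by rw [← hb, sq]⟩
  have hdvd := minpoly.degree_dvd (K := F) (x := δ) ⟨_, hmonic, hroot⟩
  rwa [← minpoly.eq_of_irreducible_of_monic hirr hroot hmonic, natDegree_X_pow_sub_C] at hdvd

theorem nonempty_gal_mulEquiv_perm_of_factorial_dvd_finrank {p : F[X]} (hp : p.Separable)
    (hdvd : p.natDegree.factorial ∣ Module.finrank F p.SplittingField) :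
    Nonempty (p.Gal ≃* Equiv.Perm (Fin p.natDegree)) := by
  classical
  have hsplits := SplittingField.splits p
  have : Fact ((p.map (algebraMap F p.SplittingField)).Splits) := ⟨hsplits⟩
  have hroots : Fintype.card (p.rootSet p.SplittingField) = p.natDegree :=
    card_rootSet_eq_natDegree hp hsplits
  have hperm : Nat.card (Equiv.Perm (p.rootSet p.SplittingField)) = p.natDegree.factorial := by
    rw [Nat.card_perm, Nat.card_eq_fintype_card, hroots]
  have hinj := Gal.galActionHom_injective p p.SplittingField
  have hcard : Nat.card p.Gal = Nat.card (Equiv.Perm (p.rootSet p.SplittingField)) := by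
    refine le_antisymm (Nat.card_le_card_of_injective _ hinj) (Nat.le_of_dvd Nat.card_pos ?_)
    rwa [hperm, Gal.card_of_separable hp]
  have hbij := (Nat.bijective_iff_injective_and_card _).2 ⟨hinj, hcard⟩
  exact ⟨(MulEquiv.ofBijective _ hbij).trans (Fintype.equivFinOfCardEq hroots).permCongrHom⟩

end Gal

section Cubic

variable {F : Type*} [Field F] {P : Cubic F}

theorem separable_toPoly_of_discr_ne_zero (ha : P.a ≠ 0) (hd : P.discr ≠ 0) :
    P.toPoly.Separable := by
  have hsplits := SplittingField.splits P.toPoly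
  rw [← nodup_aroots_iff_of_splits (Cubic.ne_zero_of_a_ne_zero ha) hsplits, aroots,
    ← Cubic.map_roots]
  exact (Cubic.discr_ne_zero_iff_roots_nodup ha hsplits).1 hd

theorem isSquare_algebraMap_discr_of_splits {L : Type*} [Field L] [Algebra F L] (ha : P.a ≠ 0)
    (hsplits : (P.toPoly.map (algebraMap F L)).Splits) : IsSquare (algebraMap F L P.discr) := by
  obtain ⟨x, y, z, hxyz⟩ := (Cubic.splits_iff_roots_eq_three ha).1 hsplits
  rw [Cubic.discr_eq_prod_three_roots ha hxyz]
  exact IsSquare.sq _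

theorem nonempty_gal_mulEquiv_perm_fin_three (ha : P.a ≠ 0) (hirr : Irreducible P.toPoly)
    (hd : ¬ IsSquare P.discr) : Nonempty (P.toPoly.Gal ≃* Equiv.Perm (Fin 3)) := by
  have hsplits := SplittingField.splits P.toPoly
  have hdeg : P.toPoly.natDegree = 3 := Cubic.natDegree_of_a_ne_zero ha
  have hsep : P.toPoly.Separable :=
    separable_toPoly_of_discr_ne_zero ha fun h ↦ hd (h ▸ IsSquare.zero)
  have htwo : 2 ∣ Module.finrank F P.toPoly.SplittingField :=
    two_dvd_finrank_of_isSquare_algebraMap hd (isSquare_algebraMap_discr_of_splits ha hsplits)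
  have hthree : 3 ∣ Module.finrank F P.toPoly.SplittingField :=
    hdeg ▸ Irreducible.natDegree_dvd_finrank hirr hsplits
  have hsix : Nat.factorial 3 ∣ Module.finrank F P.toPoly.SplittingField :=
    Nat.Coprime.mul_dvd_of_dvd_of_dvd (by norm_num : Nat.Coprime 3 2) hthree htwo
  rw [← hdeg] at hsix
  exact hdeg ▸ nonempty_gal_mulEquiv_perm_of_factorial_dvd_finrank hsep hsix

end Cubic

theorem discr_map_cubic {R S : Type*} [CommRing R] [CommRing S] (φ : R →+* S) (P : Cubic R) :
    (P.map φ).discr = φ P.discr := by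
  simp only [Cubic.discr, Cubic.map, map_add, map_sub, map_mul, map_pow, map_ofNat]

section Specialization

variable {R K : Type*} [CommRing R] [IsIntegrallyClosed R] [Field K] [Algebra R K]
  [IsFractionRing R K]

theorem isSquare_of_isSquare_algebraMap_s16 {r : R} (h : IsSquare (algebraMap R K r)) :
    IsSquare r := by
  obtain ⟨b, hb⟩ := h
  obtain ⟨c, rfl⟩ := IsIntegrallyClosed.exists_algebraMap_eq_of_isIntegral_pow (R := R) (x := b)
    two_pos (by rw [sq, ← hb]; exact isIntegral_algebraMap)
  exact ⟨c, IsFractionRing.injective R K (by rw [hb, map_mul])⟩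

theorem irreducible_map_algebraMap_of_irreducible_map {S : Type*} [CommRing S] [IsDomain S]
    (φ : R →+* S) {p : R[X]} (hp : p.Monic) (hirr : Irreducible (p.map φ)) :
    Irreducible (p.map (algebraMap R K)) := by
  have : IsDomain R := (IsFractionRing.injective R K).isDomain _
  exact hp.irreducible_iff_irreducible_map_fraction_map.1
    (hp.irreducible_of_irreducible_map φ p hirr)

theorem irreducible_and_nonempty_gal_mulEquiv_of_specialization {S : Type*} [CommRing S]
    [IsDomain S] (φ : R →+* S) {P : Cubic R} (ha : P.a = 1)
    (hirr : Irreducible (P.map φ).toPoly) (hd : ¬ IsSquare (P.map φ).discr) :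
    Irreducible (P.map (algebraMap R K)).toPoly ∧
      Nonempty ((P.map (algebraMap R K)).toPoly.Gal ≃* Equiv.Perm (Fin 3)) := by
  have hirrK : Irreducible (P.map (algebraMap R K)).toPoly := by
    rw [Cubic.map_toPoly] at hirr ⊢
    exact irreducible_map_algebraMap_of_irreducible_map φ (Cubic.monic_of_a_eq_one ha) hirr
  have haK : (P.map (algebraMap R K)).a ≠ 0 := by simp [Cubic.map, ha]
  refine ⟨hirrK, nonempty_gal_mulEquiv_perm_fin_three haK hirrK fun hsq ↦ hd ?_⟩
  rw [discr_map_cubic] at hsq ⊢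
  exact (isSquare_of_isSquare_algebraMap_s16 hsq).map φ

end Specialization

section MainCubic

variable {R : Type*} [CommRing R]

/-- The cubic `(x² - 1)(x + u) - 1`, given by its coefficients. The polynomial of the theorem is
the case `u = t ^ ℓ - 1`. -/
def mainCubic (u : R) : Cubic R :=
  ⟨1, u, -1, -u - 1⟩

theorem mainCubic_toPoly (u : R) : (mainCubic u).toPoly = (X ^ 2 - 1) * (X + C u) - 1 := by
  simp only [mainCubic, Cubic.toPoly, map_sub, map_neg, map_one]
  ring

theorem mainCubic_map {S : Type*} [CommRing S] (φ : R →+* S) (u : R) :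
    (mainCubic u).map φ = mainCubic (φ u) := by
  simp [mainCubic, Cubic.map]

theorem mainCubic_discr (u : R) :
    (mainCubic u).discr = 4 * u ^ 4 + 4 * u ^ 3 - 8 * u ^ 2 - 36 * u - 23 := by
  simp only [mainCubic, Cubic.discr]
  ring

theorem irreducible_mainCubic_zero : Irreducible (mainCubic (0 : ℚ)).toPoly := by
  have hselmer : (mainCubic (0 : ℚ)).toPoly = X ^ 3 - X - 1 := by
    rw [mainCubic_toPoly, C_0]
    ring
  exact hselmer ▸ X_pow_sub_X_sub_one_irreducible_rat (by norm_num)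

theorem not_isSquare_discr_mainCubic_zero : ¬ IsSquare (mainCubic (0 : ℚ)).discr := by
  rw [mainCubic_discr]
  exact fun hsq ↦ absurd hsq.nonneg (by norm_num)

theorem separable_mainCubic_neg_one {k : Type*} [Field k] (h5 : (5 : k) ≠ 0) :
    (mainCubic (-1 : k)).toPoly.Separable := by
  have hdiscr : (mainCubic (-1 : k)).discr = 5 := by
    rw [mainCubic_discr]
    ring
  exact separable_toPoly_of_discr_ne_zero one_ne_zero (hdiscr ▸ h5)

end MainCubic

theorem cubic_main_poly_general {R K : Type*} [CommRing R] [IsIntegrallyClosed R]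
    [Field K] [Algebra R K] [IsFractionRing R K] (φ : R →+* ℚ) {f : R} (hf : φ f = 1) :
    Irreducible ((X ^ 2 - 1) * (X + C (algebraMap R K f - 1)) - 1 : K[X]) ∧
    Nonempty (((X ^ 2 - 1) * (X + C (algebraMap R K f - 1)) - 1 : K[X]).Gal ≃*
      Equiv.Perm (Fin 3)) ∧
    ((X ^ 2 - 1) * (X - 1) - 1 : ℚ[X]).Separable := by
  have hφ : (mainCubic (f - 1)).map φ = mainCubic 0 := by
    rw [mainCubic_map, map_sub, hf, map_one, sub_self]
  have hgeneric := irreducible_and_nonempty_gal_mulEquiv_of_specialization (K := K) φ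
    (P := mainCubic (f - 1)) rfl (hφ ▸ irreducible_mainCubic_zero)
    (hφ ▸ not_isSquare_discr_mainCubic_zero)
  rw [mainCubic_map, mainCubic_toPoly, map_sub, map_one] at hgeneric
  have hsep := separable_mainCubic_neg_one (k := ℚ) (by norm_num)
  rw [mainCubic_toPoly, C_neg, C_1, ← sub_eq_add_neg] at hsep
  exact ⟨hgeneric.1, hgeneric.2, hsep⟩

/-- The case `n = 3` of the main polynomial: for every `ℓ ≥ 1`, the polynomial
`(x²−1)(x + t^ℓ − 1) − 1` is irreducible over `ℚ(t)` with Galois group isomorphic to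
`S_3`, and its specialization `(x²−1)(x−1) − 1 ∈ ℚ[x]` at `t = 0` is separable. -/
theorem cubic_main_poly (ℓ : ℕ) (hℓ : 1 ≤ ℓ) :
    Irreducible ((X ^ 2 - 1) * (X + C (RatFunc.X ^ ℓ - 1)) - 1 :
      Polynomial (RatFunc ℚ)) ∧
    Nonempty (((X ^ 2 - 1) * (X + C (RatFunc.X ^ ℓ - 1)) - 1 :
      Polynomial (RatFunc ℚ)).Gal ≃* Equiv.Perm (Fin 3)) ∧
    ((X ^ 2 - 1) * (X - 1) - 1 : Polynomial ℚ).Separable := by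
  have h := cubic_main_poly_general (K := RatFunc ℚ) (evalRingHom 1) (f := X ^ ℓ) (by simp)
  rwa [map_pow, RatFunc.algebraMap_X] at h
end

section
/- There exists an admissible pair; that is, there exist positive integers N and T₀ such that for every integer τ with |τ| ≥ T₀ and τ ≡ 1 (mod a_1⋯a_{n-1}) for which the Galois group of f(τ,x) over ℚ is isomorphic to S_n and |disc(K_{a(τ)})| > |τ|^{2/(n+2)}, the subgroup of the unit group of the ring of integers of K_{a(τ)} generated by −1 and ξ−a_1, …, ξ−a_{n-1} has finite index at most N. -/
open Polynomial NumberField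

set_option synthInstance.maxHeartbeats 1000000
set_option maxHeartbeats 1000000

/-- The main polynomial
`f(t,x) = (x−a_1)⋯(x−a_{n-1})·(x − (−1)^{n-1}(t^ℓ−1)/(a_1⋯a_{n-1})) − 1`,
viewed as a polynomial in `x` over `ℚ(t)`. -/
noncomputable def mainPoly (n ℓ : ℕ) (a : Fin (n - 1) → ℤ) : Polynomial (RatFunc ℚ) :=
  (∏ i, (X - C ((a i : ℤ) : RatFunc ℚ))) *
    (X - C ((-1) ^ (n - 1) * (RatFunc.X ^ ℓ - 1) / (((∏ i, a i : ℤ) : RatFunc ℚ)))) - 1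

/-- The specialization `f(0,x) ∈ ℚ[x]`. -/
noncomputable def mainPolyZero (n ℓ : ℕ) (a : Fin (n - 1) → ℤ) : Polynomial ℚ :=
  (∏ i, (X - C ((a i : ℤ) : ℚ))) *
    (X - C ((-1) ^ (n - 1) * ((0 : ℚ) ^ ℓ - 1) / (((∏ i, a i : ℤ) : ℚ)))) - 1

/-- `a(τ) = (−1)^{n-1}(τ^ℓ−1)/(a_1⋯a_{n-1})`, an integer whenever
`τ ≡ 1 (mod a_1⋯a_{n-1})`. -/
noncomputable def aTau (n ℓ : ℕ) (a : Fin (n - 1) → ℤ) (τ : ℤ) : ℤ :=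
  (-1) ^ (n - 1) * ((τ ^ ℓ - 1) / ∏ i, a i)

/-- The specialization `f(τ,x)`, viewed in `ℚ[x]`. -/
noncomputable def specPolyQ (n ℓ : ℕ) (a : Fin (n - 1) → ℤ) (τ : ℤ) : Polynomial ℚ :=
  (∏ i, (X - C ((a i : ℤ) : ℚ))) * (X - C ((aTau n ℓ a τ : ℤ) : ℚ)) - 1

/-- `ℚ[x]/(p)` is a number field when `p` is irreducible. -/
noncomputable instance (p : Polynomial ℚ) [h : Fact (Irreducible p)] :
    NumberField (AdjoinRoot p) := by
  haveI : CharZero (AdjoinRoot p) :=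
    charZero_of_injective_algebraMap (algebraMap ℚ (AdjoinRoot p)).injective
  haveI : FiniteDimensional ℚ (AdjoinRoot p) :=
    Module.Finite.of_basis (AdjoinRoot.powerBasis h.out.ne_zero).basis
  exact ⟨⟩

/-- The subgroup of the unit group of the ring of integers of
`K_{a(τ)} = ℚ[x]/(f(τ,x))` generated by `−1` and the ABC-units
`ξ−a_1, …, ξ−a_{n-1}`. -/
noncomputable def abcUnitSubgroup (n ℓ : ℕ) (a : Fin (n - 1) → ℤ) (τ : ℤ)
    [Fact (Irreducible (specPolyQ n ℓ a τ))] :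
    Subgroup ((𝓞 (AdjoinRoot (specPolyQ n ℓ a τ)))ˣ) :=
  Subgroup.closure {u : (𝓞 (AdjoinRoot (specPolyQ n ℓ a τ)))ˣ |
    algebraMap (𝓞 (AdjoinRoot (specPolyQ n ℓ a τ)))
      (AdjoinRoot (specPolyQ n ℓ a τ)) ↑u = -1 ∨
    ∃ i, algebraMap (𝓞 (AdjoinRoot (specPolyQ n ℓ a τ)))
      (AdjoinRoot (specPolyQ n ℓ a τ)) ↑u =
        AdjoinRoot.root (specPolyQ n ℓ a τ) - (a i : AdjoinRoot (specPolyQ n ℓ a τ))}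

/-- A pair `(N, T₀)` of positive integers is *admissible* if for every integer `τ`
with `|τ| ≥ T₀`, `τ ≡ 1 (mod a_1⋯a_{n-1})`, such that the Galois group of `f(τ,x)`
over `ℚ` is `S_n` and `|disc K_{a(τ)}| > |τ|^{2/(n+2)}`, the subgroup of the units
generated by `−1` and the ABC-units has finite index at most `N`. -/
def Admissible (n ℓ : ℕ) (a : Fin (n - 1) → ℤ) (N T₀ : ℕ) : Prop :=
  0 < N ∧ 0 < T₀ ∧
    ∀ τ : ℤ, (T₀ : ℤ) ≤ |τ| → ((∏ i, a i) ∣ (τ - 1)) →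
      Nonempty ((specPolyQ n ℓ a τ).Gal ≃* Equiv.Perm (Fin n)) →
      ∀ [Fact (Irreducible (specPolyQ n ℓ a τ))],
        |(NumberField.discr (AdjoinRoot (specPolyQ n ℓ a τ)) : ℝ)| >
            |(τ : ℝ)| ^ ((2 : ℝ) / ((n : ℝ) + 2)) →
          (abcUnitSubgroup n ℓ a τ).index ≠ 0 ∧ (abcUnitSubgroup n ℓ a τ).index ≤ N

/-- An integer `τ` is *suitable* with respect to an admissible pair `(N, T₀)`. -/
def Suitable (n ℓ : ℕ) (a : Fin (n - 1) → ℤ) (N T₀ : ℕ) (τ : ℤ) : Prop :=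
  (T₀ : ℤ) ≤ |τ| ∧ ((∏ i, a i) ∣ (τ - 1)) ∧
    (∀ Dz : ℤ, (Dz : ℚ) = (∏ i, ((a i : ℤ) : ℚ)) *
        ((mainPolyZero n ℓ a).derivative.eval 0) → Int.gcd τ Dz = 1) ∧
    Nonempty ((specPolyQ n ℓ a τ).Gal ≃* Equiv.Perm (Fin n)) ∧
    ∀ [Fact (Irreducible (specPolyQ n ℓ a τ))],
      |(NumberField.discr (AdjoinRoot (specPolyQ n ℓ a τ)) : ℝ)| >
          |(τ : ℝ)| ^ ((2 : ℝ) / ((n : ℝ) + 2)) ∧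
      ∀ (ν : ℕ) (νs : Fin (n - 1) → ℕ), 1 ≤ ν → ν ≤ N → (∀ i, νs i < ν * ℓ) →
        ∀ ζ : AlgebraicClosure (AdjoinRoot (specPolyQ n ℓ a τ)),
          ζ ^ (ℓ * ν) =
            algebraMap (AdjoinRoot (specPolyQ n ℓ a τ))
                (AlgebraicClosure (AdjoinRoot (specPolyQ n ℓ a τ)))
                (AdjoinRoot.root (specPolyQ n ℓ a τ)) ^ ν *
              ∏ i, (algebraMap (AdjoinRoot (specPolyQ n ℓ a τ))
                  (AlgebraicClosure (AdjoinRoot (specPolyQ n ℓ a τ)))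
                  (AdjoinRoot.root (specPolyQ n ℓ a τ)) -
                (a i : AlgebraicClosure (AdjoinRoot (specPolyQ n ℓ a τ)))) ^ (νs i) →
          ℓ ≤ Module.finrank (AdjoinRoot (specPolyQ n ℓ a τ))
            (IntermediateField.adjoin (AdjoinRoot (specPolyQ n ℓ a τ)) {ζ})

/-!
Write `b = a(τ)` and `K = K_b`. Since `∏ (ξ - aₖ) · (ξ - b) = 1`, the polynomial has for each `k` a
complex root very close to `aₖ`, and there `log |ξ - aₖ| ≈ -log |b|`, while the other
`log |ξ - aⱼ|` stay bounded. In suitable `n - 1` coordinates the logarithms of the units `ξ - aₖ`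
therefore form a diagonally dominant matrix with entries `O(log |τ|)`.

As the Galois group is `S_n`, whose point stabilizers are maximal, `K` has no proper intermediate
fields, so a unit `w ≠ ±1` generates `K`. Its powers `1, w, …, w^(n-1)` have discriminant at least
`|disc K| > |τ|^(2/(n+2))`, which by the Vandermonde formula forces some conjugate of `w` to be at
least a fixed positive power of `|τ|`. Hence a unit with logarithmic image shorter than
`ε = c log |τ|` is `±1`.

The ratio of the two scales does not depend on `τ`. Cutting the fundamental parallelepiped of the
logarithmic lattice into `M ^ (n - 1)` cells of diameter at most `ε`, with `M` independent of `τ`,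
the pigeonhole principle bounds the index by `M ^ (n - 1)`.
-/

section SymmetricGaloisGroup

open IntermediateField

variable {F : Type*} [Field F] {p : F[X]}

theorem toPermHom_gal_surjective (hp : p.Separable)
    (hcard : Nat.card p.Gal = p.natDegree.factorial) :
    Function.Surjective (MulAction.toPermHom p.Gal (p.rootSet p.SplittingField)) := by
  have hinj : Function.Injective (MulAction.toPermHom p.Gal (p.rootSet p.SplittingField)) :=
    fun σ τ h ↦ Gal.ext p fun x hx ↦ congrArg Subtype.val (Equiv.congr_fun h ⟨x, hx⟩)
  refine (Nat.bijective_iff_injective_and_card _).2 ⟨hinj, ?_⟩ |>.surjective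
  rw [hcard, Nat.card_perm, Nat.card_eq_fintype_card,
    card_rootSet_eq_natDegree hp (SplittingField.splits p)]

theorem isPreprimitive_gal_rootSet (hp : p.Separable)
    (hcard : Nat.card p.Gal = p.natDegree.factorial) :
    MulAction.IsPreprimitive p.Gal (p.rootSet p.SplittingField) := by
  let f : p.rootSet p.SplittingField →ₑ[MulAction.toPermHom p.Gal (p.rootSet p.SplittingField)]
      p.rootSet p.SplittingField := ⟨id, fun _ _ ↦ rfl⟩
  exact (MulAction.isPreprimitive_congr (f := f) (toPermHom_gal_surjective hp hcard)
    Function.bijective_id).2 inferInstance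

theorem fixingSubgroup_adjoin_simple_eq_stabilizer (r : p.rootSet p.SplittingField) :
    F⟮(r : p.SplittingField)⟯.fixingSubgroup = MulAction.stabilizer p.Gal r := by
  refine Subgroup.ext fun g ↦ (IntermediateField.mem_fixingSubgroup_iff _ g).trans ?_
  calc (∀ x ∈ F⟮(r : p.SplittingField)⟯, g x = x)
    _ ↔ ∀ x ∈ ({↑r} : Set p.SplittingField), g x = x := forall_mem_adjoin_smul_eq_self_iff F g
    _ ↔ g ↑r = ↑r := by simp only [Set.mem_singleton_iff, forall_eq]
    _ ↔ g ∈ MulAction.stabilizer p.Gal r := (Subtype.ext_iff (a1 := (g : p.Gal) • r)).symm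

theorem isAtom_adjoin_simple_root (hp : p.Separable) (hdeg : 1 < p.natDegree)
    (hcard : Nat.card p.Gal = p.natDegree.factorial) (r : p.rootSet p.SplittingField) :
    IsAtom F⟮(r : p.SplittingField)⟯ := by
  have : IsGalois F p.SplittingField := IsGalois.of_separable_splitting_field hp
  have : Nontrivial (p.rootSet p.SplittingField) := by
    rwa [← Fintype.one_lt_card_iff_nontrivial,
      card_rootSet_eq_natDegree hp (SplittingField.splits p)]
  have := isPreprimitive_gal_rootSet hp hcard
  rw [← IsGalois.intermediateFieldEquivSubgroup.isAtom_iff, ← isCoatom_dual_iff_isAtom]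
  change IsCoatom F⟮(r : p.SplittingField)⟯.fixingSubgroup
  rw [fixingSubgroup_adjoin_simple_eq_stabilizer]
  exact MulAction.IsPreprimitive.isCoatom_stabilizer_of_isPreprimitive p.Gal r

theorem isSimpleOrder_intermediateField_of_isAtom_fieldRange {L E : Type*} [Field L] [Field E]
    [Algebra F L] [Algebra F E] (f : L →ₐ[F] E) (hf : IsAtom f.fieldRange) :
    IsSimpleOrder (IntermediateField F L) where
  exists_pair_ne := ⟨⊥, ⊤, fun h ↦ hf.1 <| by
    rw [f.fieldRange_eq_map, ← h, IntermediateField.map_bot]⟩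
  eq_bot_or_eq_top S := by
    have hle : S.map f ≤ f.fieldRange := f.fieldRange_eq_map ▸ map_mono f le_top
    refine (hf.le_iff.1 hle).imp (fun h ↦ map_injective f ?_) fun h ↦ map_injective f ?_
    · rw [h, IntermediateField.map_bot]
    · rw [h, f.fieldRange_eq_map]

theorem isSimpleOrder_intermediateField_adjoinRoot [Fact (Irreducible p)] (hp : p.Separable)
    (hdeg : 1 < p.natDegree) (hcard : Nat.card p.Gal = p.natDegree.factorial) :
    IsSimpleOrder (IntermediateField F (AdjoinRoot p)) := by
  obtain ⟨r⟩ : Nonempty (p.rootSet p.SplittingField) := by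
    rw [← Fintype.card_pos_iff, card_rootSet_eq_natDegree hp (SplittingField.splits p)]
    exact zero_lt_one.trans hdeg
  let f : AdjoinRoot p →ₐ[F] p.SplittingField :=
    AdjoinRoot.liftAlgHom p (Algebra.ofId F _) r (aeval_eq_zero_of_mem_rootSet r.2)
  have hroot : f (AdjoinRoot.root p) = r :=
    AdjoinRoot.lift_root (aeval_eq_zero_of_mem_rootSet r.2)
  have hrange : f.fieldRange = F⟮(r : p.SplittingField)⟯ := by
    have htop : F⟮AdjoinRoot.root p⟯ = ⊤ := adjoin_root_eq_top p
    rw [f.fieldRange_eq_map, ← htop, adjoin_map, Set.image_singleton, hroot]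
  exact isSimpleOrder_intermediateField_of_isAtom_fieldRange f
    (hrange ▸ isAtom_adjoin_simple_root hp hdeg hcard r)

end SymmetricGaloisGroup

section ShortUnits

theorem norm_det_vandermonde_sq_le {𝕜 : Type*} [NormedField 𝕜] {n : ℕ} {v : Fin n → 𝕜} {H : ℝ}
    (hv : ∀ i, ‖v i‖ ≤ H) :
    ‖(Matrix.vandermonde v).det‖ ^ 2 ≤ (2 * H) ^ (n * (n - 1)) := by
  have hcard : (∑ i : Fin n, (Finset.Ioi i).card) * 2 = n * (n - 1) := by
    simp only [Fin.card_Ioi]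
    rw [Fin.sum_univ_eq_sum_range (n - 1 - ·), Finset.sum_range_reflect (fun i ↦ i),
      Finset.sum_range_id_mul_two]
  calc ‖(Matrix.vandermonde v).det‖ ^ 2
    _ = (∏ i, ∏ j ∈ Finset.Ioi i, ‖v j - v i‖) ^ 2 := by
      simp only [Matrix.det_vandermonde, norm_prod]
    _ ≤ (∏ i : Fin n, ∏ _j ∈ Finset.Ioi i, 2 * H) ^ 2 := by
      gcongr with i _ j
      exact (norm_sub_le _ _).trans (by linarith [hv i, hv j])
    _ = (2 * H) ^ (n * (n - 1)) := by
      simp only [Finset.prod_const, Finset.prod_pow_eq_pow_sum, ← pow_mul, hcard]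

variable {K : Type*} [Field K] [NumberField K]

open IntermediateField

theorem discr_int_eq_det_toMatrix_sq_mul_discr {ι : Type*} [Fintype ι] [DecidableEq ι]
    (b : Module.Basis ι ℤ (𝓞 K)) (c : ι → 𝓞 K) :
    Algebra.discr ℤ c = (b.toMatrix c).det ^ 2 * discr K := by
  rw [← Module.Basis.toMatrix_map_vecMul b c, Algebra.discr_of_matrix_vecMul,
    Module.Basis.toMatrix_map_vecMul, discr_eq_discr]

theorem abs_discr_le_abs_discr_int {ι : Type*} [Fintype ι] [DecidableEq ι]
    (hι : Fintype.card ι = Module.finrank ℚ K) {c : ι → 𝓞 K} (hc : Algebra.discr ℤ c ≠ 0) :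
    |discr K| ≤ |Algebra.discr ℤ c| := by
  have e : Module.Free.ChooseBasisIndex ℤ (𝓞 K) ≃ ι := Fintype.equivOfCardEq <| by
    rw [hι, Module.finrank_eq_card_basis (integralBasis K)]
  have hdiscr := discr_int_eq_det_toMatrix_sq_mul_discr ((RingOfIntegers.basis K).reindex e) c
  exact Int.le_of_dvd (abs_pos.2 hc) ((abs_dvd_abs _ _).2 ⟨_, hdiscr.trans (mul_comm _ _)⟩)

theorem coe_discr_int {ι : Type*} [Fintype ι] [DecidableEq ι] (c : ι → 𝓞 K) :
    (Algebra.discr ℤ c : ℚ) = Algebra.discr ℚ fun i ↦ (c i : K) := by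
  simp only [Algebra.discr_def, Int.cast_det]
  congr 1
  ext i j
  simp [Algebra.traceMatrix_apply, Algebra.traceForm_apply, Algebra.coe_trace_int]

theorem coe_discr_powers_eq_det_vandermonde_sq {n : ℕ} (e : Fin n ≃ (K →ₐ[ℚ] ℂ)) (w : 𝓞 K) :
    (Algebra.discr ℤ (fun i : Fin n ↦ w ^ (i : ℕ)) : ℂ) =
      (Matrix.vandermonde fun i ↦ e i w).det ^ 2 := by
  have hmat : Algebra.embeddingsMatrixReindex ℚ ℂ (fun i : Fin n ↦ ((w ^ (i : ℕ) : 𝓞 K) : K)) e =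
      (Matrix.vandermonde fun i ↦ e i w).transpose := by
    ext i j
    simp [Algebra.embeddingsMatrixReindex, Algebra.embeddingsMatrix, Matrix.vandermonde_apply]
  have h := Algebra.discr_eq_det_embeddingsMatrixReindex_pow_two ℚ ℂ
    (fun i : Fin n ↦ ((w ^ (i : ℕ) : 𝓞 K) : K)) e
  rw [hmat, Matrix.det_transpose, ← coe_discr_int] at h
  simpa using h

theorem abs_discr_le_of_adjoin_eq_top {w : 𝓞 K} (hw : ℚ⟮(w : K)⟯ = ⊤) {H : ℝ}
    (hH : ∀ σ : K →+* ℂ, ‖σ w‖ ≤ H) :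
    |(discr K : ℝ)| ≤ (2 * H) ^ (Module.finrank ℚ K * (Module.finrank ℚ K - 1)) := by
  set n := Module.finrank ℚ K
  let e : Fin n ≃ (K →ₐ[ℚ] ℂ) := (Fintype.equivFinOfCardEq (AlgHom.card ℚ K ℂ)).symm
  have hinj : Function.Injective fun i ↦ e i w :=
    Function.Injective.comp ((Field.primitive_element_iff_algHom_eq_of_eval' ℚ ℂ
      (fun _ ↦ IsAlgClosed.splits _) _).1 hw) e.injective
  have hdet := coe_discr_powers_eq_det_vandermonde_sq e w
  have hne : Algebra.discr ℤ (fun i : Fin n ↦ w ^ (i : ℕ)) ≠ 0 := by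
    rw [← Int.cast_ne_zero (α := ℂ), hdet]
    exact pow_ne_zero 2 (Matrix.det_vandermonde_ne_zero_iff.2 hinj)
  calc |(discr K : ℝ)|
    _ ≤ |(Algebra.discr ℤ (fun i : Fin n ↦ w ^ (i : ℕ)) : ℝ)| := by
      exact_mod_cast abs_discr_le_abs_discr_int (Fintype.card_fin n) hne
    _ = ‖(Matrix.vandermonde fun i ↦ e i w).det‖ ^ 2 := by
      rw [← norm_pow, ← hdet, Complex.norm_intCast]
    _ ≤ (2 * H) ^ (n * (n - 1)) := norm_det_vandermonde_sq_le fun i ↦ hH (e i)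

theorem eq_one_or_neg_one_of_adjoin_eq_bot {w : (𝓞 K)ˣ} (hw : ℚ⟮(w : K)⟯ = ⊥) :
    w = 1 ∨ w = -1 := by
  obtain ⟨q, hq⟩ := mem_bot.1 (adjoin_simple_eq_bot_iff.1 hw)
  have hnorm := NumberField.Units.norm K w
  rw [← hq, Algebra.norm_algebraMap, abs_pow,
    pow_eq_one_iff_of_nonneg (abs_nonneg q) Module.finrank_pos.ne'] at hnorm
  refine (eq_or_eq_neg_of_abs_eq hnorm).imp ?_ ?_ <;> rintro rfl <;>
    exact Units.ext (RingOfIntegers.ext (by simp [← hq]))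

theorem eq_one_or_neg_one_of_norm_le [IsSimpleOrder (IntermediateField ℚ K)] {w : (𝓞 K)ˣ} {H : ℝ}
    (hH : ∀ σ : K →+* ℂ, ‖σ (w : K)‖ ≤ H)
    (hdiscr : (2 * H) ^ (Module.finrank ℚ K * (Module.finrank ℚ K - 1)) < |(discr K : ℝ)|) :
    w = 1 ∨ w = -1 :=
  (eq_bot_or_eq_top ℚ⟮(w : K)⟯).elim eq_one_or_neg_one_of_adjoin_eq_bot fun htop ↦
    absurd (abs_discr_le_of_adjoin_eq_top htop hH) hdiscr.not_ge

end ShortUnits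

section IndexBound

variable {G E ι : Type*} [AddCommGroup G] [NormedAddCommGroup E] [NormedSpace ℝ E]

theorem norm_sub_le_of_floor_mul_repr_eq [Fintype ι] (b : Module.Basis ι ℝ E) {x y : E} {M : ℝ}
    (hM : 0 < M) (h : ∀ i, ⌊M * b.repr x i⌋ = ⌊M * b.repr y i⌋) : ‖x - y‖ ≤ (∑ i, ‖b i‖) / M := by
  rw [← b.sum_repr (x - y), Finset.sum_div]
  refine norm_sum_le_of_le _ fun i _ ↦ ?_
  have hlt := Int.abs_sub_lt_one_of_floor_eq_floor (h i)
  rw [← mul_sub, abs_mul, abs_of_pos hM, mul_comm, ← lt_div_iff₀ hM] at hlt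
  rw [norm_smul, map_sub, Finsupp.sub_apply, Real.norm_eq_abs, div_eq_mul_one_div, mul_comm]
  gcongr

theorem exists_sub_mem_and_mem_fundamentalDomain [Finite ι] (b : Module.Basis ι ℝ E)
    (l : G →+ E) {Γ : AddSubgroup G} (hb : ∀ i, b i ∈ Γ.map l) (g : G) :
    ∃ r, g - r ∈ Γ ∧ l r ∈ ZSpan.fundamentalDomain b := by
  cases nonempty_fintype ι
  have hspan : Submodule.span ℤ (Set.range b) ≤ (Γ.map l).toIntSubmodule :=
    Submodule.span_le.2 (Set.range_subset_iff.2 hb)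
  obtain ⟨γ, hγ, hlγ⟩ := hspan (ZSpan.floor b (l g)).2
  refine ⟨g - γ, by rwa [sub_sub_cancel], ?_⟩
  rw [map_sub, hlγ]
  exact ZSpan.fract_mem_fundamentalDomain b (l g)

/-- Pigeonhole: the fundamental parallelepiped of `b` splits into `M ^ card ι` cells, and two
representatives in the same cell are congruent modulo `Γ`. -/
theorem index_le_pow_card_of_forall_norm_le_mem [Fintype ι] (b : Module.Basis ι ℝ E)
    (l : G →+ E) {Γ : AddSubgroup G} (hb : ∀ i, b i ∈ Γ.map l) {ε : ℝ}
    (hΓ : ∀ w, ‖l w‖ ≤ ε → w ∈ Γ) {M : ℕ} (hM : 0 < M) (hε : ∑ i, ‖b i‖ ≤ M * ε) :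
    Γ.index ≠ 0 ∧ Γ.index ≤ M ^ Fintype.card ι := by
  have hM' : (0 : ℝ) < M := by exact_mod_cast hM
  choose rep hrepΓ hrep using exists_sub_mem_and_mem_fundamentalDomain b l hb
  have hmem (q : G ⧸ Γ) (i : ι) : ⌊M * b.repr (l (rep q.out)) i⌋ ∈ Finset.Ico (0 : ℤ) M := by
    obtain ⟨h0, h1⟩ := hrep q.out i
    rw [Finset.mem_Ico, Int.floor_nonneg, Int.floor_lt, Int.cast_natCast]
    exact ⟨by positivity, mul_lt_of_lt_one_right hM' h1⟩
  let cell (q : G ⧸ Γ) (i : ι) : Finset.Ico (0 : ℤ) M := ⟨_, hmem q i⟩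
  have hcell : Function.Injective cell := by
    intro q q' h
    have hle : ‖l (rep q.out - rep q'.out)‖ ≤ ε := by
      rw [map_sub]
      refine (norm_sub_le_of_floor_mul_repr_eq b hM' fun i ↦ ?_).trans
        ((div_le_iff₀' hM').2 hε)
      exact congrArg Subtype.val (congrFun h i)
    have hsub : q.out - q'.out ∈ Γ := by
      have := Γ.add_mem (Γ.sub_mem (hrepΓ q.out) (hrepΓ q'.out)) (hΓ _ hle)
      rwa [sub_sub_sub_comm, sub_add_cancel] at this
    rw [← q.out_eq', ← q'.out_eq']
    exact QuotientAddGroup.eq_iff_sub_mem.2 hsub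
  have : Finite (G ⧸ Γ) := Finite.of_injective cell hcell
  refine ⟨AddSubgroup.index_ne_zero_of_finite, ?_⟩
  calc Γ.index ≤ Nat.card (ι → Finset.Ico (0 : ℤ) M) := Nat.card_le_card_of_injective cell hcell
    _ = M ^ Fintype.card ι := by
      rw [Nat.card_fun, Nat.card_eq_fintype_card, Nat.card_eq_fintype_card, Fintype.card_coe,
        Int.card_Ico, sub_zero, Int.toNat_natCast]

end IndexBound

section LogEmbedding

variable {K ι : Type*} [Field K]

/-- The logarithmic embedding `u ↦ (log |σᵢ u|)ᵢ` of the units along a family `σ` of complex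
embeddings, in additive notation. -/
noncomputable def logEmbedding (σ : ι → K →+* ℂ) : Additive (𝓞 K)ˣ →+ (ι → ℝ) where
  toFun u i := Real.log ‖σ i (u.toMul : K)‖
  map_zero' := by ext; simp
  map_add' u v := by
    ext i
    simp [Real.log_mul]

theorem logEmbedding_ofMul_apply (σ : ι → K →+* ℂ) (u : (𝓞 K)ˣ) (i : ι) :
    logEmbedding σ (Additive.ofMul u) i = Real.log ‖σ i (u : K)‖ := rfl

variable [NumberField K]

theorem sum_log_norm_embeddings_eq_zero (u : (𝓞 K)ˣ) :
    ∑ σ : K →+* ℂ, Real.log ‖σ (u : K)‖ = 0 := by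
  have hprod : ∏ σ : K →+* ℂ, ‖σ (u : K)‖ = 1 := calc
    ∏ σ : K →+* ℂ, ‖σ (u : K)‖
    _ = ‖∏ σ : K →ₐ[ℚ] ℂ, σ (u : K)‖ := by
      rw [norm_prod]
      exact Fintype.prod_equiv (RingHom.equivRatAlgHom K ℂ) _ _ fun σ ↦ rfl
    _ = ((|Algebra.norm ℚ (u : K)| : ℚ) : ℝ) := by
      rw [← Algebra.norm_eq_prod_embeddings, eq_ratCast, Complex.norm_ratCast, Rat.cast_abs]
    _ = 1 := by rw [NumberField.Units.norm, Rat.cast_one]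
  rw [← Real.log_prod fun σ _ ↦ by simp, hprod, Real.log_one]

theorem log_norm_le_of_norm_logEmbedding_le [Fintype ι] {σ : ι → K →+* ℂ}
    (hσ : Function.Injective σ) (hcard : Module.finrank ℚ K = Fintype.card ι + 1) {u : (𝓞 K)ˣ}
    {ε : ℝ} (hu : ‖logEmbedding σ (Additive.ofMul u)‖ ≤ ε) (τ : K →+* ℂ) :
    Real.log ‖τ (u : K)‖ ≤ Module.finrank ℚ K * ε := by
  classical
  have hε : 0 ≤ ε := (norm_nonneg _).trans hu
  have habs (i : ι) : |Real.log ‖σ i (u : K)‖| ≤ ε := (norm_le_pi_norm _ i).trans hu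
  rw [hcard, Nat.cast_add_one, add_one_mul]
  by_cases hτ : ∃ i, σ i = τ
  · obtain ⟨i, rfl⟩ := hτ
    exact (le_abs_self _).trans ((habs i).trans (le_add_of_nonneg_left (by positivity)))
  have hnotMem : τ ∉ Finset.univ.image σ := by simpa using hτ
  have huniv : insert τ (Finset.univ.image σ) = Finset.univ := Finset.eq_univ_of_card _ <| by
    rw [Finset.card_insert_of_notMem hnotMem, Finset.card_image_of_injective _ hσ,
      Finset.card_univ, NumberField.Embeddings.card, hcard]
  have hsum := sum_log_norm_embeddings_eq_zero u
  rw [← huniv, Finset.sum_insert hnotMem, Finset.sum_image hσ.injOn, add_eq_zero_iff_eq_neg]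
    at hsum
  calc Real.log ‖τ (u : K)‖ = ∑ i, -Real.log ‖σ i (u : K)‖ := by
        rw [hsum, Finset.sum_neg_distrib]
    _ ≤ ∑ _i : ι, ε := Finset.sum_le_sum fun i _ ↦ (neg_le_abs _).trans (habs i)
    _ ≤ Fintype.card ι * ε + ε := by simpa using hε

theorem index_le_of_det_logEmbedding_ne_zero [Fintype ι] [DecidableEq ι]
    [IsSimpleOrder (IntermediateField ℚ K)] (hcard : Module.finrank ℚ K = Fintype.card ι + 1)
    {σ : ι → K →+* ℂ} (hσ : Function.Injective σ)
    {Γ : Subgroup (𝓞 K)ˣ} (hneg : -1 ∈ Γ) {v : ι → (𝓞 K)ˣ} (hv : ∀ k, v k ∈ Γ)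
    (hdet : (Matrix.of fun k ↦ logEmbedding σ (Additive.ofMul (v k))).det ≠ 0) {R ε : ℝ}
    (hR : ∀ k, ‖logEmbedding σ (Additive.ofMul (v k))‖ ≤ R)
    (hdiscr : (2 * Real.exp (Module.finrank ℚ K * ε)) ^
      (Module.finrank ℚ K * (Module.finrank ℚ K - 1)) < |(discr K : ℝ)|)
    {M : ℕ} (hM : 0 < M) (hMε : Fintype.card ι * R ≤ M * ε) :
    Γ.index ≠ 0 ∧ Γ.index ≤ M ^ Fintype.card ι := by
  classical
  let b := basisOfPiSpaceOfLinearIndependent (Matrix.linearIndependent_rows_of_det_ne_zero hdet)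
  have hb (k : ι) : b k = logEmbedding σ (Additive.ofMul (v k)) :=
    congrFun (coe_basisOfPiSpaceOfLinearIndependent _) k
  rw [← Subgroup.index_toAddSubgroup]
  refine index_le_pow_card_of_forall_norm_le_mem b (logEmbedding σ)
    (fun k ↦ ⟨_, hv k, (hb k).symm⟩) (ε := ε) (fun w hw ↦ ?_) hM ?_
  · have hle (τ : K →+* ℂ) : ‖τ (w.toMul : K)‖ ≤ Real.exp (Module.finrank ℚ K * ε) :=
      (Real.log_le_iff_le_exp (by simp)).1 (log_norm_le_of_norm_logEmbedding_le hσ hcard hw τ)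
    obtain h | h := eq_one_or_neg_one_of_norm_le hle hdiscr
    · exact (h ▸ Γ.one_mem : w.toMul ∈ Γ)
    · exact (h ▸ hneg : w.toMul ∈ Γ)
  · calc ∑ k, ‖b k‖ ≤ ∑ _k : ι, R := Finset.sum_le_sum fun k _ ↦ hb k ▸ hR k
      _ ≤ M * ε := by simpa using hMε

end LogEmbedding

section RootEstimates

theorem pairwise_one_le_norm_intCast_sub {ι : Type*} {a : ι → ℤ} (ha : Function.Injective a) :
    Pairwise fun j k ↦ 1 ≤ ‖(a j : ℂ) - a k‖ := by
  intro j k hjk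
  rw [← Int.cast_sub, Complex.norm_intCast]
  exact_mod_cast Int.one_le_abs (sub_ne_zero.2 (ha.ne hjk))

theorem injective_of_norm_sub_lt_half {ι α E : Type*} [SeminormedAddCommGroup E] {a : ι → E}
    (hsep : Pairwise fun j k ↦ 1 ≤ ‖a j - a k‖) (f : α → E) {s : ι → α}
    (hs : ∀ j, ‖f (s j) - a j‖ < 1 / 2) : Function.Injective s := by
  intro j k hjk
  by_contra hne
  have hle := norm_sub_le_norm_sub_add_norm_sub (a j) (f (s j)) (a k)
  have hk : ‖f (s j) - a k‖ < 1 / 2 := hjk ▸ hs k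
  rw [norm_sub_rev (a j) (f (s j))] at hle
  linarith [hsep hne, hs j]

theorem abs_log_le_log {x c : ℝ} (hc : 0 < c) (hcx : c⁻¹ ≤ x) (hxc : x ≤ c) :
    |Real.log x| ≤ Real.log c := by
  have hx : 0 < x := (inv_pos.2 hc).trans_le hcx
  refine abs_le.2 ⟨?_, Real.log_le_log hx hxc⟩
  rw [← Real.log_inv]
  exact Real.log_le_log (inv_pos.2 hc) hcx

theorem abs_log_norm_sub_le {E : Type*} [SeminormedAddCommGroup E] {x y z : E} {A : ℝ}
    (hx : ‖x‖ ≤ A) (hy : ‖y‖ ≤ A) (hxy : 1 ≤ ‖x - y‖) (hz : ‖z - x‖ < 1 / 2) :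
    |Real.log ‖z - y‖| ≤ Real.log (2 * A + 2) := by
  have hle := norm_sub_le x y
  have hlower := norm_sub_le_norm_sub_add_norm_sub x z y
  have hupper := norm_sub_le_norm_sub_add_norm_sub z x y
  rw [norm_sub_rev x z] at hlower
  refine abs_log_le_log (by linarith) ?_ (by linarith)
  calc (2 * A + 2)⁻¹ ≤ 2⁻¹ := by gcongr; linarith
    _ ≤ ‖z - y‖ := by linarith

theorem abs_log_norm_sub_sub_log_norm_le {E : Type*} [SeminormedAddCommGroup E] {x y : E}
    (hy : 0 < ‖y‖) (hxy : 2 * ‖x‖ ≤ ‖y‖) :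
    |Real.log ‖x - y‖ - Real.log ‖y‖| ≤ Real.log 2 := by
  have hlower := norm_sub_norm_le y x
  have hupper := norm_sub_le x y
  rw [norm_sub_rev] at hlower
  rw [← Real.log_div (by linarith) hy.ne']
  refine abs_log_le_log two_pos ?_ ?_
  · rw [le_div_iff₀ hy]
    linarith
  · rw [div_le_iff₀ hy]
    linarith

variable {𝕜 ι : Type*} [NormedField 𝕜] [Fintype ι]

theorem sum_log_norm_add_log_norm_eq_zero {x : ι → 𝕜} {y : 𝕜} (h : (∏ k, x k) * y = 1) :
    ∑ k, Real.log ‖x k‖ + Real.log ‖y‖ = 0 := by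
  have hx (k : ι) : ‖x k‖ ≠ 0 :=
    norm_ne_zero_iff.2 (Finset.prod_ne_zero_iff.1 (left_ne_zero_of_mul_eq_one h) k
      (Finset.mem_univ k))
  rw [← Real.log_prod fun k _ ↦ hx k, ← Real.log_mul (Finset.prod_ne_zero_iff.2 fun k _ ↦ hx k)
    (norm_ne_zero_iff.2 (right_ne_zero_of_mul_eq_one h)), ← norm_prod, ← norm_mul, h, norm_one,
    Real.log_one]

theorem abs_log_norm_sub_add_log_norm_le {a : ι → 𝕜} {b z : 𝕜} {A : ℝ} (ha : ∀ k, ‖a k‖ ≤ A)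
    (hsep : Pairwise fun j k ↦ 1 ≤ ‖a j - a k‖) (hb : 2 * A + 2 ≤ ‖b‖)
    (hroot : (∏ k, (z - a k)) * (z - b) = 1) {j : ι} (hz : ‖z - a j‖ < 1 / 2) :
    |Real.log ‖z - a j‖ + Real.log ‖b‖| ≤ Fintype.card ι * Real.log (2 * A + 2) := by
  classical
  have hA : 0 ≤ A := (norm_nonneg _).trans (ha j)
  have hothers : |∑ k ∈ Finset.univ.erase j, Real.log ‖z - a k‖| ≤
      (Finset.univ.erase j).card * Real.log (2 * A + 2) := by
    rw [← nsmul_eq_mul]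
    exact (Finset.abs_sum_le_sum_abs _ _).trans <| Finset.sum_le_card_nsmul _ _ _ fun k hk ↦
      abs_log_norm_sub_le (ha j) (ha k) (hsep (Finset.ne_of_mem_erase hk).symm) hz
  have hlast : |Real.log ‖z - b‖ - Real.log ‖b‖| ≤ Real.log (2 * A + 2) := by
    have hnorm : ‖z‖ ≤ ‖z - a j‖ + ‖a j‖ := by simpa using norm_add_le (z - a j) (a j)
    refine (abs_log_norm_sub_sub_log_norm_le (by linarith) (by linarith [ha j])).trans ?_
    exact Real.log_le_log two_pos (by linarith)
  have hsum := sum_log_norm_add_log_norm_eq_zero hroot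
  rw [← Finset.add_sum_erase _ _ (Finset.mem_univ j)] at hsum
  rw [← Finset.card_univ, ← Finset.card_erase_add_one (Finset.mem_univ j)]
  push_cast
  rw [abs_le] at hothers hlast ⊢
  constructor <;> linarith

end RootEstimates

section NearlyDiagonal

variable {ι : Type*} [Fintype ι] {m : Matrix ι ι ℝ} {C L : ℝ}

theorem det_ne_zero_of_abs_le_of_abs_diag_add_le [DecidableEq ι]
    (hoff : ∀ j k, k ≠ j → |m k j| ≤ C) (hdiag : ∀ j, |m j j + L| ≤ Fintype.card ι * C)
    (hC : 0 ≤ C) (hL : 2 * Fintype.card ι * C < L) : m.det ≠ 0 := by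
  refine det_ne_zero_of_sum_col_lt_diag fun j ↦ ?_
  calc ∑ k ∈ Finset.univ.erase j, ‖m k j‖
    _ ≤ (Finset.univ.erase j).card • C :=
      Finset.sum_le_card_nsmul _ _ _ fun k hk ↦ hoff j k (Finset.ne_of_mem_erase hk)
    _ ≤ Fintype.card ι • C := nsmul_le_nsmul_left hC (Finset.card_le_univ _)
    _ < -m j j := by
      rw [nsmul_eq_mul]
      linarith [(abs_le.1 (hdiag j)).2]
    _ ≤ ‖m j j‖ := neg_le_abs _

theorem norm_row_le_of_abs_le_of_abs_diag_add_le
    (hoff : ∀ j k, k ≠ j → |m k j| ≤ C) (hdiag : ∀ j, |m j j + L| ≤ Fintype.card ι * C)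
    (hC : 0 ≤ C) (hL : 2 * Fintype.card ι * C < L) (k : ι) : ‖m k‖ ≤ 2 * L := by
  have hcard : (1 : ℝ) ≤ Fintype.card ι := by
    exact_mod_cast Fintype.card_pos_iff.2 ⟨k⟩
  have hCL : C ≤ Fintype.card ι * C := le_mul_of_one_le_left hC hcard
  refine (pi_norm_le_iff_of_nonneg (by linarith)).2 fun j ↦ ?_
  by_cases hkj : k = j
  · subst hkj
    have := abs_le.1 (hdiag k)
    exact abs_le.2 ⟨by linarith, by linarith⟩
  · rw [Real.norm_eq_abs]
    linarith [hoff j k hkj]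

end NearlyDiagonal

section ProductPolynomial

variable {R ι : Type*} [CommRing R] [Fintype ι] (a : ι → R) (b : R)

theorem monic_prod_X_sub_C_mul_X_sub_C : ((∏ i, (X - C (a i))) * (X - C b)).Monic :=
  (monic_prod_X_sub_C a _).mul (monic_X_sub_C b)

theorem natDegree_prod_X_sub_C_mul_X_sub_C [Nontrivial R] :
    ((∏ i, (X - C (a i))) * (X - C b)).natDegree = Fintype.card ι + 1 := by
  rw [(monic_prod_X_sub_C a _).natDegree_mul (monic_X_sub_C b),
    natDegree_finsetProd_X_sub_C_eq_card, natDegree_X_sub_C, Finset.card_univ]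

theorem natDegree_prod_X_sub_C_mul_X_sub_C_sub_one [Nontrivial R] :
    ((∏ i, (X - C (a i))) * (X - C b) - 1).natDegree = Fintype.card ι + 1 := by
  rw [natDegree_sub_eq_left_of_natDegree_lt, natDegree_prod_X_sub_C_mul_X_sub_C]
  rw [natDegree_one, natDegree_prod_X_sub_C_mul_X_sub_C]
  exact Nat.succ_pos _

theorem monic_prod_X_sub_C_mul_X_sub_C_sub_one [Nontrivial R] :
    ((∏ i, (X - C (a i))) * (X - C b) - 1).Monic := by
  have hmonic := monic_prod_X_sub_C_mul_X_sub_C a b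
  refine hmonic.sub_of_left ?_
  rw [degree_one, degree_eq_natDegree hmonic.ne_zero, natDegree_prod_X_sub_C_mul_X_sub_C]
  exact_mod_cast Nat.succ_pos _

end ProductPolynomial

section UnitsFromRoot

theorem isIntegral_of_prod_sub_mul_sub_eq_one {R ι : Type*} [CommRing R] [Fintype ι] {a : ι → ℤ}
    {b : ℤ} {ξ : R} (hroot : (∏ k, (ξ - a k)) * (ξ - b) = 1) : IsIntegral ℤ ξ :=
  ⟨_, monic_prod_X_sub_C_mul_X_sub_C_sub_one a b, by
    simp [eval₂_finsetProd, -eq_intCast, hroot]⟩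

theorem exists_units_coe_eq_sub {K ι : Type*} [Field K] [Fintype ι] {a : ι → ℤ} {b : ℤ} {ξ : K}
    (hroot : (∏ k, (ξ - a k)) * (ξ - b) = 1) :
    ∃ (v : ι → (𝓞 K)ˣ) (w : (𝓞 K)ˣ), (∀ k, (v k : K) = ξ - a k) ∧ (w : K) = ξ - b := by
  obtain ⟨x, rfl⟩ : ∃ x : 𝓞 K, (x : K) = ξ :=
    ⟨⟨ξ, isIntegral_of_prod_sub_mul_sub_eq_one hroot⟩, rfl⟩
  have hprod : (∏ k, (x - a k)) * (x - b) = 1 :=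
    RingOfIntegers.coe_injective (by simpa using hroot)
  have hunit (k : ι) : IsUnit (x - a k) :=
    (IsUnit.prod_univ_iff.1 (IsUnit.of_mul_eq_one _ hprod)) k
  exact ⟨fun k ↦ (hunit k).unit, (IsUnit.of_mul_eq_one_right _ hprod).unit, by simp, by simp⟩

end UnitsFromRoot

section SpecialUnits

variable {K : Type*} [Field K] [NumberField K]

theorem norm_embedding_le_two_pow {u : (𝓞 K)ˣ} (hu : ∀ σ : K →+* ℂ, 1 / 2 ≤ ‖σ (u : K)‖)
    (σ : K →+* ℂ) : ‖σ (u : K)‖ ≤ 2 ^ (Module.finrank ℚ K - 1) := by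
  classical
  have hothers : (Module.finrank ℚ K - 1 : ℕ) * -Real.log 2 ≤
      ∑ τ ∈ Finset.univ.erase σ, Real.log ‖τ (u : K)‖ := by
    rw [← NumberField.Embeddings.card K ℂ, ← Finset.card_univ,
      ← Finset.card_erase_of_mem (Finset.mem_univ σ), ← nsmul_eq_mul]
    refine Finset.card_nsmul_le_sum _ _ _ fun τ _ ↦ ?_
    rw [← Real.log_inv, ← one_div]
    exact Real.log_le_log (by norm_num) (hu τ)
  have hsum := sum_log_norm_embeddings_eq_zero u
  rw [← Finset.add_sum_erase _ _ (Finset.mem_univ σ)] at hsum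
  rw [← Real.log_le_log_iff (by simp) (by positivity), Real.log_pow]
  linarith

theorem exists_embedding_norm_lt_half {u w : (𝓞 K)ˣ} {c : ℤ} (hw : (w : K) = u - c)
    (hc : 2 ^ (Module.finrank ℚ K - 1) + 1 < |(c : ℝ)|) : ∃ σ : K →+* ℂ, ‖σ (u : K)‖ < 1 / 2 := by
  by_contra! hu
  have hlog (σ : K →+* ℂ) : 0 < Real.log ‖σ (w : K)‖ := by
    refine Real.log_pos ?_
    have hle := norm_sub_norm_le (c : ℂ) (σ u)
    rw [norm_sub_rev, Complex.norm_intCast] at hle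
    rw [hw, map_sub, map_intCast]
    linarith [norm_embedding_le_two_pow hu σ]
  have hpos := Finset.sum_pos (fun σ _ ↦ hlog σ) Finset.univ_nonempty
  exact hpos.ne' (sum_log_norm_embeddings_eq_zero w)

variable {ι : Type*} [Fintype ι] {a : ι → ℤ} {b : ℤ} {ξ : K} {A : ℝ}

theorem exists_embedding_norm_sub_intCast_lt_half {v : ι → (𝓞 K)ˣ} {w : (𝓞 K)ˣ}
    (hcard : Module.finrank ℚ K = Fintype.card ι + 1) (hA : ∀ k, |(a k : ℝ)| ≤ A)
    (hb : (2 * A + 2) ^ (2 * Fintype.card ι) < |(b : ℝ)|) (hv : ∀ k, (v k : K) = ξ - a k)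
    (hw : (w : K) = ξ - b) (j : ι) : ∃ σ : K →+* ℂ, ‖σ ξ - a j‖ < 1 / 2 := by
  have hsub : (w : K) = v j - (b - a j : ℤ) := by rw [hw, hv]; push_cast; ring
  have hlarge : A + 1 + 2 ^ Fintype.card ι < |(b : ℝ)| := by
    have hA0 : 0 ≤ A := (abs_nonneg _).trans (hA j)
    have hcard0 : Fintype.card ι ≠ 0 := (Fintype.card_pos_iff.2 ⟨j⟩).ne'
    have hbase : 2 * A + 2 ≤ (2 * A + 2) ^ Fintype.card ι := le_self_pow₀ (by linarith) hcard0
    have htwo : (2 : ℝ) ^ Fintype.card ι ≤ (2 * A + 2) ^ Fintype.card ι := by gcongr; linarith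
    rw [mul_comm 2 (Fintype.card ι), pow_mul] at hb
    nlinarith
  obtain ⟨σ, hσ⟩ := exists_embedding_norm_lt_half hsub <| by
    rw [hcard, Nat.add_sub_cancel, Int.cast_sub]
    linarith [abs_sub_abs_le_abs_sub (b : ℝ) (a j), hA j]
  exact ⟨σ, by simpa [hv] using hσ⟩

theorem index_le_of_prod_sub_mul_sub_eq_one [IsSimpleOrder (IntermediateField ℚ K)]
    (hcard : Module.finrank ℚ K = Fintype.card ι + 1) (ha : Function.Injective a)
    (hA0 : 0 ≤ A) (hA : ∀ k, |(a k : ℝ)| ≤ A)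
    (hb : (2 * A + 2) ^ (2 * Fintype.card ι) < |(b : ℝ)|)
    (hroot : (∏ k, (ξ - a k)) * (ξ - b) = 1)
    {Γ : Subgroup (𝓞 K)ˣ} (hneg : -1 ∈ Γ)
    (hΓ : ∀ (u : (𝓞 K)ˣ) (k : ι), (u : K) = ξ - a k → u ∈ Γ) {ε : ℝ}
    (hdiscr : (2 * Real.exp (Module.finrank ℚ K * ε)) ^
      (Module.finrank ℚ K * (Module.finrank ℚ K - 1)) < |(discr K : ℝ)|)
    {M : ℕ} (hM : 0 < M) (hMε : Fintype.card ι * (2 * Real.log |(b : ℝ)|) ≤ M * ε) :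
    Γ.index ≠ 0 ∧ Γ.index ≤ M ^ Fintype.card ι := by
  classical
  obtain ⟨v, w, hv, hw⟩ := exists_units_coe_eq_sub hroot
  choose σ hσ using exists_embedding_norm_sub_intCast_lt_half hcard hA hb hv hw
  have hsep := pairwise_one_le_norm_intCast_sub ha
  have hA' (k : ι) : ‖(a k : ℂ)‖ ≤ A := (Complex.norm_intCast _).trans_le (hA k)
  set C := Real.log (2 * A + 2)
  set L := Real.log |(b : ℝ)|
  let m : Matrix ι ι ℝ := Matrix.of fun k ↦ logEmbedding σ (Additive.ofMul (v k))
  have hm (k j : ι) : m k j = Real.log ‖σ j ξ - a k‖ := by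
    simp [m, logEmbedding_ofMul_apply, hv]
  have hC : 0 ≤ C := Real.log_nonneg (by linarith)
  have hL : 2 * Fintype.card ι * C < L := by
    have := Real.log_lt_log (by positivity) hb
    rwa [Real.log_pow, Nat.cast_mul, Nat.cast_ofNat] at this
  have hoff (j k : ι) (hkj : k ≠ j) : |m k j| ≤ C :=
    hm k j ▸ abs_log_norm_sub_le (hA' j) (hA' k) (hsep hkj.symm) (hσ j)
  have hdiag (j : ι) : |m j j + L| ≤ Fintype.card ι * C := by
    have hb' : 2 * A + 2 ≤ ‖(b : ℂ)‖ := by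
      rw [Complex.norm_intCast]
      have hcard0 : 2 * Fintype.card ι ≠ 0 := by simp [Nonempty.intro j]
      exact (le_self_pow₀ (by linarith) hcard0).trans hb.le
    have hrootσ : (∏ k, (σ j ξ - a k)) * (σ j ξ - b) = 1 := by simpa using congrArg (σ j) hroot
    have := abs_log_norm_sub_add_log_norm_le hA' hsep hb' hrootσ (hσ j)
    rwa [Complex.norm_intCast, ← hm] at this
  exact index_le_of_det_logEmbedding_ne_zero hcard (injective_of_norm_sub_lt_half hsep (· ξ) hσ)
    hneg (fun k ↦ hΓ _ k (hv k))
    (det_ne_zero_of_abs_le_of_abs_diag_add_le hoff hdiag hC hL)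
    (norm_row_le_of_abs_le_of_abs_diag_add_le hoff hdiag hC hL) hdiscr hM hMε

end SpecialUnits

theorem two_mul_exp_pow_le_rpow {n : ℕ} (hn : 1 ≤ n) {T : ℝ} (hT : 2 ^ (n ^ 2 * (n + 2)) ≤ T) :
    (2 * Real.exp (n * (Real.log T / (n ^ 3 * (n + 2))))) ^ (n * (n - 1)) ≤
      T ^ ((2 : ℝ) / (n + 2)) := by
  have hT0 : 0 < T := lt_of_lt_of_le (by positivity) hT
  have : (0 : ℝ) < n := by exact_mod_cast hn
  set δ := n * (Real.log T / (n ^ 3 * (n + 2))) with hδ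
  have hlogT : Real.log T = n ^ 2 * (n + 2) * δ := by rw [hδ]; field_simp
  have hlog : Real.log 2 ≤ δ := by
    have := Real.log_le_log (by positivity) hT
    rw [Real.log_pow, hlogT] at this
    push_cast at this
    exact le_of_mul_le_mul_left this (by positivity)
  have hδ0 : 0 ≤ δ := (Real.log_nonneg one_le_two).trans hlog
  calc (2 * Real.exp δ) ^ (n * (n - 1))
    _ ≤ Real.exp (2 * δ) ^ (n * (n - 1)) := by
      rw [two_mul δ, Real.exp_add]
      gcongr
      exact (Real.log_le_iff_le_exp two_pos).1 hlog
    _ ≤ Real.exp (2 * δ) ^ (n ^ 2) := by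
      refine pow_le_pow_right₀ (Real.one_le_exp (by positivity)) ?_
      rw [sq]
      exact Nat.mul_le_mul_left _ (Nat.sub_le _ _)
    _ = T ^ ((2 : ℝ) / (n + 2)) := by
      rw [Real.rpow_def_of_pos hT0, ← Real.exp_nat_mul, hlogT]
      congr 1
      push_cast
      field_simp

section Specialization

variable {n ℓ : ℕ} {a : Fin (n - 1) → ℤ} {τ : ℤ}

theorem natDegree_specPolyQ (hn : 1 ≤ n) : (specPolyQ n ℓ a τ).natDegree = n := by
  rw [specPolyQ, natDegree_prod_X_sub_C_mul_X_sub_C_sub_one, Fintype.card_fin,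
    Nat.sub_add_cancel hn]

theorem prod_root_sub_mul_root_sub_eq_one :
    (∏ k, (AdjoinRoot.root (specPolyQ n ℓ a τ) - a k)) *
      (AdjoinRoot.root (specPolyQ n ℓ a τ) - aTau n ℓ a τ) = 1 := by
  have h := AdjoinRoot.eval₂_root (specPolyQ n ℓ a τ)
  conv at h => enter [1, 3]; rw [specPolyQ]
  simp only [eval₂_sub, eval₂_mul, eval₂_finsetProd, eval₂_X, eval₂_C, eval₂_one] at h
  simpa [sub_eq_zero] using h

theorem abs_aTau_mul_abs_prod (hdvd : ∏ i, a i ∣ τ - 1) :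
    |aTau n ℓ a τ| * |∏ i, a i| = |τ ^ ℓ - 1| := by
  have hdvd' : ∏ i, a i ∣ τ ^ ℓ - 1 := hdvd.trans (by simpa using sub_dvd_pow_sub_pow τ 1 ℓ)
  rw [aTau, ← abs_mul, mul_assoc, Int.ediv_mul_cancel hdvd', abs_mul, abs_neg_one_pow, one_mul]

theorem abs_aTau_le_abs_pow (hne : ∀ i, a i ≠ 0) (hdvd : ∏ i, a i ∣ τ - 1) (hτ : 2 ≤ |τ|) :
    |aTau n ℓ a τ| ≤ |τ| ^ (ℓ + 1) := by
  have hprod : 1 ≤ |∏ i, a i| := Int.one_le_abs (Finset.prod_ne_zero_iff.2 fun i _ ↦ hne i)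
  have hpow : 1 ≤ |τ| ^ ℓ := one_le_pow₀ (by lia)
  calc |aTau n ℓ a τ| ≤ |aTau n ℓ a τ| * |∏ i, a i| :=
        le_mul_of_one_le_right (abs_nonneg _) hprod
    _ = |τ ^ ℓ - 1| := abs_aTau_mul_abs_prod hdvd
    _ ≤ |τ| ^ ℓ + 1 := by simpa [abs_pow] using abs_sub (τ ^ ℓ) 1
    _ ≤ |τ| ^ ℓ * |τ| := by nlinarith
    _ = |τ| ^ (ℓ + 1) := (pow_succ _ _).symm

theorem abs_sub_one_le_abs_aTau_mul_abs_prod (hℓ : ℓ ≠ 0) (hdvd : ∏ i, a i ∣ τ - 1)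
    (hτ : 1 ≤ |τ|) : |τ| - 1 ≤ |aTau n ℓ a τ| * |∏ i, a i| :=
  calc |τ| - 1 ≤ |τ ^ ℓ| - |1| := by
        rw [abs_pow, abs_one]
        exact sub_le_sub_right (le_self_pow₀ hτ hℓ) 1
    _ ≤ |τ ^ ℓ - 1| := abs_sub_abs_le_abs_sub _ _
    _ = |aTau n ℓ a τ| * |∏ i, a i| := (abs_aTau_mul_abs_prod hdvd).symm

theorem lt_abs_aTau {B : ℝ} (hℓ : ℓ ≠ 0) (hdvd : ∏ i, a i ∣ τ - 1)
    (hτ : 1 ≤ |τ|) (hB : B * |((∏ i, a i : ℤ) : ℝ)| + 1 < |(τ : ℝ)|) :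
    B < |(aTau n ℓ a τ : ℝ)| := by
  have hle : |(τ : ℝ)| - 1 ≤ |(aTau n ℓ a τ : ℝ)| * |((∏ i, a i : ℤ) : ℝ)| := by
    exact_mod_cast abs_sub_one_le_abs_aTau_mul_abs_prod hℓ hdvd hτ
  exact lt_of_mul_lt_mul_right (by linarith) (abs_nonneg ((∏ i, a i : ℤ) : ℝ))

theorem log_abs_aTau_le (hne : ∀ i, a i ≠ 0) (hdvd : ∏ i, a i ∣ τ - 1) (hτ : 2 ≤ |τ|)
    (h0 : aTau n ℓ a τ ≠ 0) : Real.log |(aTau n ℓ a τ : ℝ)| ≤ (ℓ + 1) * Real.log |(τ : ℝ)| := by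
  have hle : |(aTau n ℓ a τ : ℝ)| ≤ |(τ : ℝ)| ^ (ℓ + 1) := by
    exact_mod_cast abs_aTau_le_abs_pow hne hdvd hτ
  rw [← Nat.cast_add_one, ← Real.log_pow]
  exact Real.log_le_log (by simpa using h0) hle

theorem isSimpleOrder_intermediateField_adjoinRoot_specPolyQ (hn : 2 ≤ n)
    [hp : Fact (Irreducible (specPolyQ n ℓ a τ))]
    (hG : Nonempty ((specPolyQ n ℓ a τ).Gal ≃* Equiv.Perm (Fin n))) :
    IsSimpleOrder (IntermediateField ℚ (AdjoinRoot (specPolyQ n ℓ a τ))) := by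
  have hdeg : (specPolyQ n ℓ a τ).natDegree = n := natDegree_specPolyQ (by lia)
  refine isSimpleOrder_intermediateField_adjoinRoot hp.out.separable (by lia) ?_
  rw [hdeg, Nat.card_congr hG.some.toEquiv, Nat.card_perm, Nat.card_fin]

theorem index_abcUnitSubgroup_le (hn : 2 ≤ n) (hinj : Function.Injective a) {A : ℝ}
    (hA : ∀ k, |(a k : ℝ)| ≤ A)
    (hb : (2 * A + 2) ^ (2 * (n - 1)) < |(aTau n ℓ a τ : ℝ)|)
    (hG : Nonempty ((specPolyQ n ℓ a τ).Gal ≃* Equiv.Perm (Fin n)))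
    [hp : Fact (Irreducible (specPolyQ n ℓ a τ))] {ε : ℝ}
    (hdiscr : (2 * Real.exp (n * ε)) ^ (n * (n - 1)) <
      |(discr (AdjoinRoot (specPolyQ n ℓ a τ)) : ℝ)|)
    {M : ℕ} (hM : 0 < M) (hMε : (n - 1 : ℕ) * (2 * Real.log |(aTau n ℓ a τ : ℝ)|) ≤ M * ε) :
    (abcUnitSubgroup n ℓ a τ).index ≠ 0 ∧ (abcUnitSubgroup n ℓ a τ).index ≤ M ^ (n - 1) := by
  have hA0 : 0 ≤ A := (abs_nonneg _).trans (hA ⟨0, by lia⟩)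
  have hfinrank : Module.finrank ℚ (AdjoinRoot (specPolyQ n ℓ a τ)) = n :=
    (AdjoinRoot.powerBasis hp.out.ne_zero).finrank.trans (natDegree_specPolyQ (by lia))
  have := isSimpleOrder_intermediateField_adjoinRoot_specPolyQ hn hG
  have hneg : -1 ∈ abcUnitSubgroup n ℓ a τ := Subgroup.subset_closure (Or.inl (by simp))
  have := index_le_of_prod_sub_mul_sub_eq_one (ε := ε) (M := M)
    (by rw [hfinrank, Fintype.card_fin]; lia) hinj hA0 hA (by simpa using hb)
    prod_root_sub_mul_root_sub_eq_one hneg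
    (fun u k hu ↦ Subgroup.subset_closure (Or.inr ⟨k, hu⟩))
    (by rwa [hfinrank]) hM (by simpa using hMε)
  rwa [Fintype.card_fin] at this

theorem admissible_of_le (hn : 2 ≤ n) (hℓ : ℓ ≠ 0) (hinj : Function.Injective a)
    (hne : ∀ i, a i ≠ 0) {A : ℝ} (hA : ∀ k, |(a k : ℝ)| ≤ A) {T₀ : ℕ}
    (hT₀ : (2 : ℝ) ^ (n ^ 2 * (n + 2)) ≤ T₀)
    (hAT₀ : (2 * A + 2) ^ (2 * (n - 1)) * |((∏ i, a i : ℤ) : ℝ)| + 1 < T₀) :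
    Admissible n ℓ a ((2 * n ^ 4 * (n + 2) * (ℓ + 1)) ^ (n - 1)) T₀ := by
  have hA0 : 0 ≤ A := (abs_nonneg _).trans (hA ⟨0, by lia⟩)
  have hT₀' : 2 ≤ T₀ := by
    have : 2 ≤ 2 ^ (n ^ 2 * (n + 2)) := le_self_pow₀ one_le_two (by positivity)
    exact this.trans (by exact_mod_cast hT₀)
  refine ⟨by positivity, by lia, fun τ hτ hdvd hG _ hdiscr ↦ ?_⟩
  have hτ2 : 2 ≤ |τ| := by lia
  have hτ' : (T₀ : ℝ) ≤ |(τ : ℝ)| := by exact_mod_cast hτ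
  have hb := lt_abs_aTau hℓ hdvd (by lia) (hAT₀.trans_le hτ')
  have hb0 : aTau n ℓ a τ ≠ 0 := by
    have := (show (0 : ℝ) ≤ (2 * A + 2) ^ (2 * (n - 1)) by positivity).trans_lt hb
    simpa using this
  have hlog := log_abs_aTau_le hne hdvd hτ2 hb0
  refine index_abcUnitSubgroup_le hn hinj hA hb hG
    ((two_mul_exp_pow_le_rpow (by lia) (hT₀.trans hτ')).trans_lt hdiscr) (by positivity) ?_
  calc (n - 1 : ℕ) * (2 * Real.log |(aTau n ℓ a τ : ℝ)|)
    _ ≤ n * (2 * ((ℓ + 1) * Real.log |(τ : ℝ)|)) := by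
      have hlog0 : 0 ≤ Real.log |(aTau n ℓ a τ : ℝ)| :=
        Real.log_nonneg (by exact_mod_cast Int.one_le_abs hb0)
      gcongr
      exact Nat.sub_le _ _
    _ = (2 * n ^ 4 * (n + 2) * (ℓ + 1) : ℕ) * (Real.log |(τ : ℝ)| / (n ^ 3 * (n + 2))) := by
      push_cast
      field_simp

end Specialization

theorem admissible_pair_exists_general (n ℓ : ℕ) (hn : 2 ≤ n) (hℓ : 1 ≤ ℓ) (a : Fin (n - 1) → ℤ)
    (hinj : Function.Injective a) (hne : ∀ i, a i ≠ 0) : ∃ N T₀ : ℕ, Admissible n ℓ a N T₀ := by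
  have hA (k : Fin (n - 1)) : |(a k : ℝ)| ≤ ∑ k, |(a k : ℝ)| :=
    Finset.single_le_sum (f := fun k ↦ |(a k : ℝ)|) (fun _ _ ↦ abs_nonneg _) (Finset.mem_univ k)
  obtain ⟨T₀, hT₀⟩ := exists_nat_gt <| max (2 ^ (n ^ 2 * (n + 2)))
    ((2 * ∑ k, |(a k : ℝ)| + 2) ^ (2 * (n - 1)) * |((∏ i, a i : ℤ) : ℝ)| + 1)
  obtain ⟨hdiscr, hunits⟩ := max_lt_iff.1 hT₀
  exact ⟨_, T₀, admissible_of_le hn (by lia) hinj hne hA hdiscr.le hunits⟩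

/-- **Proposition 6.1.**  There exists an admissible pair: positive integers `N, T₀`
such that for every integer `τ` with `|τ| ≥ T₀`, `τ ≡ 1 (mod a_1⋯a_{n-1})`, for which
the Galois group of `f(τ,x)` over `ℚ` is `S_n` and `|disc K_{a(τ)}| > |τ|^{2/(n+2)}`,
the subgroup generated by `−1` and the ABC-units has finite index at most `N`. -/
theorem admissible_pair_exists (n ℓ : ℕ) (hn : 3 ≤ n) (hℓ : 1 ≤ ℓ)
    (a : Fin (n - 1) → ℤ) (hinj : Function.Injective a) (hne : ∀ i, a i ≠ 0)
    (hsep : (mainPoly n ℓ a).Separable)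
    (hGal : Nonempty ((mainPoly n ℓ a).Gal ≃* Equiv.Perm (Fin n)))
    (hsep0 : (mainPolyZero n ℓ a).Separable) :
    ∃ N T₀ : ℕ, Admissible n ℓ a N T₀ := by
  exact admissible_pair_exists_general n ℓ (by lia) hℓ a hinj hne
end

section
/- Let (N, T₀) be an admissible pair and let τ be a suitable integer with respect to (N, T₀). Then the ideal class group of the number field K_{a(τ)} contains an element of order exactly ℓ. -/
open Polynomial NumberField

set_option synthInstance.maxHeartbeats 1000000
set_option maxHeartbeats 1000000

/-!
Let `ξ` be the root of `f(τ, x)`. Since `f(τ, 0) = -τ ^ ℓ` and the linear coefficient of `f(τ, x)`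
is prime to `τ`, the element `ξ` is coprime to its cofactor in `τ ^ ℓ`, so `(ξ) = I ^ ℓ`.

Let `m` be the order of the class of `I` and `ℓ = m * k`. Then `ξ` times a unit is a `k`-th power.
Raise this to the index `ν` of the group generated by `-1` and the `ξ - a_i`, and reduce the
exponents of the `ξ - a_i` modulo `ν * ℓ`: one of `± ξ ^ ν * ∏ (ξ - a_i) ^ e_i` is a `k * ν`-th
power. If `k * ν` is odd the sign is absorbed. If it is even, embed the field into `ℝ` by sending
`ξ` to a root above all the `a_i`; if `ν` is odd then `ℓ` is even, hence `f(τ, 0) < 0` and that root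
may be taken positive. So the product with sign `+` is positive and is the power. It equals
`β ^ (k * ν)`, and an `m`-th root of `β` has degree at most `m`, whence `ℓ ≤ m` by condition (4).
-/

section Units

open Subgroup

theorem exists_eq_pow_mul_prod_pow_of_mem_closure_range {G ι : Type*} [CommGroup G] [Fintype ι]
    {u : ι → G} {g : G} (hg : g ∈ closure (Set.range u)) {L : ℕ} (hL : 0 < L) :
    ∃ (γ : G) (e : ι → ℕ), (∀ i, e i < L) ∧ g = γ ^ L * ∏ i, u i ^ e i := by
  obtain ⟨d, rfl⟩ := mem_closure_range_iff_of_fintype.1 hg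
  have hL' : (0 : ℤ) < L := mod_cast hL
  have toNat_emod (i) : ((d i % L).toNat : ℤ) = d i % L :=
    Int.toNat_of_nonneg (Int.emod_nonneg _ hL'.ne')
  refine ⟨∏ i, u i ^ (d i / L), fun i => (d i % L).toNat, fun i => ?_, ?_⟩
  · exact_mod_cast (toNat_emod i).trans_lt (Int.emod_lt_of_pos _ hL')
  · rw [← Finset.prod_pow, ← Finset.prod_mul_distrib]
    refine Finset.prod_congr rfl fun i _ => ?_
    rw [← zpow_natCast, ← zpow_natCast, ← zpow_mul, ← zpow_add, toNat_emod, Int.ediv_mul_add_emod]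

variable {R : Type*} [CommRing R]

theorem mem_closure_or_neg_mem_closure_of_mem_closure_insert_neg_one {s : Set Rˣ} {v : Rˣ}
    (hv : v ∈ closure (insert (-1) s)) : v ∈ closure s ∨ -v ∈ closure s := by
  rw [Set.insert_eq, Subgroup.closure_union, mem_sup] at hv
  obtain ⟨y, hy, w, hw, rfl⟩ := hv
  obtain ⟨j, rfl⟩ := mem_closure_singleton.1 hy
  obtain ⟨i, rfl | rfl⟩ := j.even_or_odd'
  · left
    simpa [zpow_mul] using hw
  · right
    simpa [zpow_add, zpow_mul] using hw

variable {ι : Type*} [Fintype ι] {u : ι → Rˣ} {x : R} {ℓ ν : ℕ}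

theorem exists_pow_eq_or_eq_neg_of_index_eq (hν : (closure (insert (-1) (Set.range u))).index = ν)
    (hL : 0 < ν * ℓ) {m k : ℕ} (hmk : m * k = ℓ) {α : R} (hα : Associated x (α ^ k)) :
    ∃ (β : R) (e : ι → ℕ), (∀ i, e i < ν * ℓ) ∧
      (β ^ (k * ν) = x ^ ν * ∏ i, (u i : R) ^ e i ∨
        β ^ (k * ν) = -(x ^ ν * ∏ i, (u i : R) ^ e i)) := by
  obtain ⟨v, hv⟩ := hα
  have absorb {w γ : Rˣ} {e : ι → ℕ} (h : w = γ ^ (ν * ℓ) * ∏ i, u i ^ e i) :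
      (w : R) * (↑γ⁻¹ ^ m) ^ (k * ν) = ∏ i, (u i : R) ^ e i := by
    rw [← pow_mul, ← mul_assoc, hmk, mul_comm ℓ, h]
    norm_cast
    rw [mul_right_comm, inv_pow, mul_inv_cancel, one_mul]
  have expand (γ : Rˣ) : (α * ↑γ⁻¹ ^ m) ^ (k * ν) =
      x ^ ν * ((v ^ ν : Rˣ) * (↑γ⁻¹ ^ m) ^ (k * ν)) := by
    rw [mul_pow, pow_mul α, ← hv, mul_pow, Units.val_pow_eq_pow_val, mul_assoc]
  obtain hmem | hmem := mem_closure_or_neg_mem_closure_of_mem_closure_insert_neg_one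
    (hν ▸ pow_index_mem (closure (insert (-1) (Set.range u))) v)
  all_goals
    obtain ⟨γ, e, he, h⟩ := exists_eq_pow_mul_prod_pow_of_mem_closure_range hmem hL
    refine ⟨α * ↑γ⁻¹ ^ m, e, he, ?_⟩
    rw [expand, ← absorb h]
  · exact .inl rfl
  · exact .inr (by push_cast; ring)

theorem exists_pow_eq_of_index_eq (hν : (closure (insert (-1) (Set.range u))).index = ν)
    (hL : 0 < ν * ℓ)
    (hpos : Even (ν * ℓ) → ∃ φ : R →+* ℝ, 0 < φ x ^ ν ∧ ∀ i, 0 < φ (u i))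
    {m k : ℕ} (hmk : m * k = ℓ) {α : R} (hα : Associated x (α ^ k)) :
    ∃ (β : R) (e : ι → ℕ), (∀ i, e i < ν * ℓ) ∧
      β ^ (k * ν) = x ^ ν * ∏ i, (u i : R) ^ e i := by
  obtain ⟨β, e, he, h | h⟩ := exists_pow_eq_or_eq_neg_of_index_eq hν hL hmk hα
  · exact ⟨β, e, he, h⟩
  -- At `φ` the element `-(x ^ ν * ∏ i, u i ^ e i)` is negative, so it is not an even power.
  rcases (k * ν).even_or_odd with heven | hodd
  · obtain ⟨φ, hx, hu⟩ := hpos (by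
      rw [← hmk, mul_comm, mul_assoc]
      exact heven.mul_left m)
    have hφ : φ β ^ (k * ν) = -(φ x ^ ν * ∏ i, φ (u i) ^ e i) := by
      simpa using congrArg φ h
    have : 0 < φ x ^ ν * ∏ i, φ (u i) ^ e i :=
      mul_pos hx (Finset.prod_pos fun i _ => pow_pos (hu i) _)
    linarith [heven.pow_nonneg (φ β)]
  · exact ⟨-β, e, he, by rw [hodd.neg_pow, h, neg_neg]⟩

end Units

section ClassGroup

variable {R : Type*} [CommRing R] [IsDedekindDomain R] {x : R} {ℓ : ℕ}

theorem exists_span_singleton_eq_pow {A : Type*} [CommRing A] [Algebra A R] {F : A[X]} {t : A}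
    (hx : aeval x F = 0) (hF0 : F.coeff 0 = -t ^ ℓ) (hF1 : IsCoprime t (F.coeff 1)) :
    ∃ I : Ideal R, Ideal.span {x} = I ^ ℓ := by
  have hfactor : x * aeval x F.divX = algebraMap A R t ^ ℓ := by
    have h := congrArg (aeval x) (X_mul_divX_add F)
    simp only [map_add, map_mul, aeval_X, aeval_C, hx, hF0, map_neg, map_pow] at h
    exact add_neg_eq_zero.1 h
  have hdivX : aeval x F.divX = x * aeval x F.divX.divX + algebraMap A R (F.coeff 1) := by
    have h := congrArg (aeval x) (X_mul_divX_add F.divX)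
    simpa only [map_add, map_mul, aeval_X, aeval_C, coeff_divX, zero_add] using h.symm
  have hcoprime : IsCoprime x (aeval x F.divX) := by
    have h := (hF1.pow_left (m := ℓ)).map (algebraMap A R)
    rw [map_pow, ← hfactor] at h
    rw [hdivX]
    exact h.of_mul_left_left.mul_add_left_right _
  refine exists_eq_pow_of_mul_eq_pow_of_coprime (b := Ideal.span {aeval x F.divX})
    (c := Ideal.span {algebraMap A R t}) ?_ ?_
  · exact (Ideal.isCoprime_span_singleton_iff _ _).2 hcoprime
  · rw [Ideal.span_singleton_mul_span_singleton, Ideal.span_singleton_pow, hfactor]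

theorem exists_orderOf_classGroup_eq_of_span_eq_pow (hx : x ≠ 0) (hℓ : ℓ ≠ 0) {I : Ideal R}
    (hI : Ideal.span {x} = I ^ ℓ)
    (hroot : ∀ m k : ℕ, m * k = ℓ → ∀ α : R, Associated x (α ^ k) → ℓ ≤ m) :
    ∃ C : ClassGroup R, orderOf C = ℓ := by
  have hI0 : I ∈ nonZeroDivisors (Ideal R) := by
    refine mem_nonZeroDivisors_of_ne_zero fun h => hx ?_
    rwa [h, zero_pow hℓ, Ideal.zero_eq_bot, Ideal.span_singleton_eq_bot] at hI
  have pow_eq_one_iff (j : ℕ) : ClassGroup.mk0 ⟨I, hI0⟩ ^ j = 1 ↔ (I ^ j).IsPrincipal := by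
    rw [← ClassGroup.mk0_eq_one_iff (pow_mem hI0 j), ← map_pow]
    rfl
  set C := ClassGroup.mk0 ⟨I, hI0⟩
  have hdvd : orderOf C ∣ ℓ :=
    orderOf_dvd_of_pow_eq_one ((pow_eq_one_iff ℓ).2 (hI ▸ ⟨⟨x, rfl⟩⟩))
  obtain ⟨⟨α, hα⟩⟩ := (pow_eq_one_iff _).1 (pow_orderOf_eq_one C)
  obtain ⟨k, hk⟩ := hdvd
  refine ⟨C, (Nat.le_of_dvd (Nat.pos_of_ne_zero hℓ) ⟨k, hk⟩).antisymm
    (hroot _ k hk.symm α (Ideal.span_singleton_eq_span_singleton.1 ?_))⟩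
  rw [← Ideal.span_singleton_pow, ← Ideal.submodule_span_eq (s := {α}), ← hα, ← pow_mul, ← hk, hI]

end ClassGroup

section Degree

theorem finrank_adjoin_le_of_pow_eq_algebraMap {K L : Type*} [Field K] [Field L] [Algebra K L]
    {m : ℕ} (hm : 0 < m) {β : K} {ζ : L} (hζ : ζ ^ m = algebraMap K L β) :
    Module.finrank K (IntermediateField.adjoin K {ζ}) ≤ m := by
  have hroot : aeval ζ (X ^ m - C β) = 0 := by simp [hζ]
  have hint : IsIntegral K ζ := ⟨X ^ m - C β, monic_X_pow_sub_C β hm.ne', hroot⟩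
  rw [IntermediateField.adjoin.finrank hint]
  simpa using natDegree_le_of_dvd (minpoly.dvd K ζ hroot) (X_pow_sub_C_ne_zero hm β)

theorem le_of_pow_eq_of_forall_le_finrank_adjoin {K : Type*} [Field K] {η β : K} {m M q : ℕ}
    (hm : 0 < m) (hβ : β ^ q = η)
    (hη : ∀ ζ : AlgebraicClosure K, ζ ^ (m * q) = algebraMap K (AlgebraicClosure K) η →
      M ≤ Module.finrank K (IntermediateField.adjoin K {ζ})) : M ≤ m := by
  obtain ⟨ζ, hζ⟩ := IsAlgClosed.exists_pow_nat_eq (algebraMap K (AlgebraicClosure K) β) hm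
  have hζη : ζ ^ (m * q) = algebraMap K (AlgebraicClosure K) η := by
    rw [pow_mul, hζ, ← map_pow, hβ]
  exact (hη ζ hζη).trans (finrank_adjoin_le_of_pow_eq_algebraMap hm hζ)

end Degree

section AbcPoly

variable {ι R : Type*} [Fintype ι] [CommRing R]

/-- The polynomial `(∏ i, (X - a i)) * (X - b) - 1`. Over `ℚ` with `b = a(τ)` it is the
specialization `f(τ, x)`; over `ℤ` it is the integral model of that specialization. -/
noncomputable def abcPoly (a : ι → R) (b : R) : R[X] :=
  (∏ i, (X - C (a i))) * (X - C b) - 1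

theorem map_abcPoly {S : Type*} [CommRing S] (φ : R →+* S) (a : ι → R) (b : R) :
    (abcPoly a b).map φ = abcPoly (fun i => φ (a i)) (φ b) := by
  simp [abcPoly, Polynomial.map_prod]

theorem natDegree_abcPoly [Nontrivial R] (a : ι → R) (b : R) :
    (abcPoly a b).natDegree = Fintype.card ι + 1 := by
  rw [abcPoly, ← C_1, natDegree_sub_C,
    (monic_prod_X_sub_C a Finset.univ).natDegree_mul (monic_X_sub_C b)]
  simp [natDegree_prod_of_monic _ _ fun i _ => monic_X_sub_C (a i)]

theorem abcPoly_monic (a : ι → R) (b : R) : (abcPoly a b).Monic := by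
  nontriviality R
  have hprod := (monic_prod_X_sub_C a Finset.univ).mul (monic_X_sub_C b)
  refine hprod.sub_of_left (degree_lt_degree ?_)
  rw [natDegree_one, ← natDegree_sub_C (a := 1), C_1, ← abcPoly, natDegree_abcPoly]
  exact Nat.succ_pos _

theorem coeff_zero_abcPoly (a : ι → R) (b : R) :
    (abcPoly a b).coeff 0 = -(b * ∏ i, -a i) - 1 := by
  simp [abcPoly, mul_coeff_zero, coeff_zero_prod, mul_comm]

theorem coeff_one_abcPoly (a : ι → R) (b : R) :
    (abcPoly a b).coeff 1 =
      (∏ i, (X - C (a i))).coeff 0 - b * (∏ i, (X - C (a i))).coeff 1 := by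
  simp [abcPoly, mul_sub, coeff_one, mul_comm b]

theorem eval_abcPoly (a : ι → R) (b c : R) :
    (abcPoly a b).eval c = (∏ i, (c - a i)) * (c - b) - 1 := by
  simp [abcPoly, eval_prod]

theorem isUnit_sub_of_aeval_abcPoly_eq_zero {S : Type*} [CommRing S] [Algebra R S] {a : ι → R}
    {b : R} {x : S} (hx : aeval x (abcPoly a b) = 0) (i : ι) :
    IsUnit (x - algebraMap R S (a i)) := by
  have hprod : (∏ i, (x - algebraMap R S (a i))) * (x - algebraMap R S b) = 1 := by
    simpa [abcPoly, sub_eq_zero] using hx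
  exact isUnit_of_dvd_one
    ((Finset.dvd_prod_of_mem _ (Finset.mem_univ i)).trans (Dvd.intro _ hprod))

end AbcPoly

section RealRoots

theorem exists_isRoot_gt_of_eval_neg {p : ℝ[X]} (hdeg : 0 < p.degree) (hlead : 0 ≤ p.leadingCoeff)
    {c : ℝ} (hc : p.eval c < 0) : ∃ r, c < r ∧ p.IsRoot r := by
  obtain ⟨d, hcd, hd⟩ := ((Filter.eventually_ge_atTop c).and
    ((p.tendsto_atTop_of_leadingCoeff_nonneg hdeg hlead).eventually_ge_atTop 0)).exists
  obtain ⟨r, hr, hr0⟩ := intermediate_value_Ioc hcd p.continuousOn ⟨hc, hd⟩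
  exact ⟨r, hr.1, hr0⟩

variable {ι : Type*} [Fintype ι] {a : ι → ℝ} {b : ℝ}

theorem exists_isRoot_abcPoly_gt {c : ℝ} (hc : (abcPoly a b).eval c < 0) :
    ∃ r, (abcPoly a b).IsRoot r ∧ c < r ∧ ∀ i, a i < r := by
  obtain ⟨j, hj⟩ := Finite.exists_max fun o : Option ι => o.elim c a
  have hneg : (abcPoly a b).eval (j.elim c a) < 0 := by
    cases j with
    | none => exact hc
    | some i => simp [eval_abcPoly, Finset.prod_eq_zero (Finset.mem_univ i)]
  have hdeg : 0 < (abcPoly a b).degree := by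
    rw [← natDegree_pos_iff_degree_pos, natDegree_abcPoly]
    exact Nat.succ_pos _
  obtain ⟨r, hjr, hr⟩ := exists_isRoot_gt_of_eval_neg hdeg
    (by simp [(abcPoly_monic a b).leadingCoeff]) hneg
  exact ⟨r, hr, (hj none).trans_lt hjr, fun i => (hj (some i)).trans_lt hjr⟩

theorem exists_isRoot_abcPoly_pow_pos {t : ℝ} {ℓ ν : ℕ} (ht : t ≠ 0)
    (h0 : (abcPoly a b).eval 0 = -t ^ ℓ) (heven : Even (ν * ℓ)) :
    ∃ r, (abcPoly a b).IsRoot r ∧ 0 < r ^ ν ∧ ∀ i, a i < r := by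
  rcases Nat.even_mul.1 heven with hν | hℓ
  · obtain ⟨r, hr, -, har⟩ :=
      exists_isRoot_abcPoly_gt (a := a) (b := b) (c := b) (by simp [eval_abcPoly])
    have hr0 : r ≠ 0 := by
      rintro rfl
      simp [IsRoot, h0, ht] at hr
    exact ⟨r, hr, hν.pow_pos hr0, har⟩
  · have hneg : (abcPoly a b).eval 0 < 0 := by simpa [h0] using hℓ.pow_pos ht
    obtain ⟨r, hr, hr0, har⟩ := exists_isRoot_abcPoly_gt hneg
    exact ⟨r, hr, pow_pos hr0 ν, har⟩

end RealRoots

section NumberField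

variable {ι : Type*} [Fintype ι] {a : ι → ℤ} {b : ℤ} {p : ℚ[X]}

theorem exists_ringHom_real_pow_pos (hp : p = (abcPoly a b).map (Int.castRingHom ℚ)) {τ : ℤ}
    {ℓ ν : ℕ} (hτ : τ ≠ 0) (h0 : (abcPoly a b).coeff 0 = -τ ^ ℓ) (heven : Even (ν * ℓ)) :
    ∃ φ : AdjoinRoot p →+* ℝ,
      0 < φ (AdjoinRoot.root p) ^ ν ∧ ∀ i, (a i : ℝ) < φ (AdjoinRoot.root p) := by
  have hmap : p.map (algebraMap ℚ ℝ) = abcPoly (fun i => (a i : ℝ)) (b : ℝ) := by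
    simp [hp, map_abcPoly]
  have h0' : (abcPoly (fun i => (a i : ℝ)) (b : ℝ)).eval 0 = -(τ : ℝ) ^ ℓ := by
    rw [← hmap, ← coeff_zero_eq_eval_zero, hp, coeff_map, coeff_map, h0]
    simp
  obtain ⟨r, hr, hrν, har⟩ := exists_isRoot_abcPoly_pow_pos (Int.cast_ne_zero.2 hτ) h0' heven
  rw [← hmap, IsRoot, eval_map] at hr
  refine ⟨AdjoinRoot.lift (algebraMap ℚ ℝ) r hr, ?_⟩
  rw [AdjoinRoot.lift_root]
  exact ⟨hrν, har⟩

variable [Fact (Irreducible p)]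

theorem exists_ringOfIntegers_root_and_units (hp : p = (abcPoly a b).map (Int.castRingHom ℚ)) :
    ∃ (x : 𝓞 (AdjoinRoot p)) (u : ι → (𝓞 (AdjoinRoot p))ˣ),
      algebraMap (𝓞 (AdjoinRoot p)) (AdjoinRoot p) x = AdjoinRoot.root p ∧
      aeval x (abcPoly a b) = 0 ∧
      ∀ i, algebraMap (𝓞 (AdjoinRoot p)) (AdjoinRoot p) (u i) =
        AdjoinRoot.root p - (a i : AdjoinRoot p) := by
  have hroot : aeval (AdjoinRoot.root p) (abcPoly a b) = 0 := by
    have h : eval₂ (AdjoinRoot.of p) (AdjoinRoot.root p)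
        ((abcPoly a b).map (Int.castRingHom ℚ)) = 0 := by rw [← hp, AdjoinRoot.eval₂_root]
    rwa [eval₂_map, Subsingleton.elim (RingHom.comp _ _) (algebraMap ℤ _)] at h
  let x : 𝓞 (AdjoinRoot p) := ⟨AdjoinRoot.root p, abcPoly a b, abcPoly_monic a b, hroot⟩
  have hx : aeval x (abcPoly a b) = 0 := by
    apply RingOfIntegers.coe_injective
    rw [map_zero, ← aeval_algebraMap_apply]
    exact hroot
  choose u hu using isUnit_sub_of_aeval_abcPoly_eq_zero hx
  exact ⟨x, u, rfl, hx, fun i => by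
    rw [hu, map_sub, eq_intCast, map_intCast]
    rfl⟩

end NumberField

section Specialization

variable {n ℓ : ℕ} {a : Fin (n - 1) → ℤ} {τ : ℤ}

theorem specPolyQ_eq_map_abcPoly (n ℓ : ℕ) (a : Fin (n - 1) → ℤ) (τ : ℤ) :
    specPolyQ n ℓ a τ = (abcPoly a (aTau n ℓ a τ)).map (Int.castRingHom ℚ) := by
  rw [map_abcPoly]
  rfl

theorem aTau_mul_prod (hdvd : (∏ i, a i) ∣ τ - 1) :
    aTau n ℓ a τ * ∏ i, a i = (-1) ^ (n - 1) * (τ ^ ℓ - 1) := by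
  rw [aTau, mul_assoc, Int.ediv_mul_cancel (hdvd.trans (sub_one_dvd_pow_sub_one τ ℓ))]

theorem coeff_zero_abcPoly_aTau (hdvd : (∏ i, a i) ∣ τ - 1) :
    (abcPoly a (aTau n ℓ a τ)).coeff 0 = -τ ^ ℓ := by
  have hsq : (-1 : ℤ) ^ (n - 1) * (-1) ^ (n - 1) = 1 := by simp [← mul_pow]
  rw [coeff_zero_abcPoly, Finset.prod_neg, Finset.card_univ, Fintype.card_fin]
  linear_combination (-(-1 : ℤ) ^ (n - 1)) * aTau_mul_prod (ℓ := ℓ) hdvd - (τ ^ ℓ - 1) * hsq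

theorem prod_mul_eval_derivative_mainPolyZero (hℓ : ℓ ≠ 0) (hne : ∀ i, a i ≠ 0) :
    (∏ i, (a i : ℚ)) * (mainPolyZero n ℓ a).derivative.eval 0 =
      (((-1) ^ (n - 1) * (∏ i, (X - C (a i))).coeff 1 +
        (∏ i, a i) * (∏ i, (X - C (a i))).coeff 0 : ℤ) : ℚ) := by
  have hA : ∏ i, (a i : ℚ) ≠ 0 := Finset.prod_ne_zero_iff.2 fun i _ => mod_cast hne i
  have hcoeff (k : ℕ) :
      (∏ i, (X - C (a i : ℚ))).coeff k = (((∏ i, (X - C (a i))).coeff k : ℤ) : ℚ) := by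
    rw [← eq_intCast (Int.castRingHom ℚ), ← coeff_map]
    simp [Polynomial.map_prod]
  have hmain : (mainPolyZero n ℓ a).derivative.eval 0 = (mainPolyZero n ℓ a).coeff 1 := by
    simp [← coeff_zero_eq_eval_zero, coeff_derivative]
  rw [hmain, mainPolyZero, ← abcPoly, coeff_one_abcPoly, hcoeff, hcoeff, zero_pow hℓ]
  push_cast
  field_simp
  ring

/-- Multiplied by the product of the `a i`, the linear coefficient of `f(τ, x)` is congruent to
`D` modulo `τ`. -/
theorem isCoprime_coeff_one_abcPoly_aTau (hℓ : ℓ ≠ 0) (hne : ∀ i, a i ≠ 0)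
    (hdvd : (∏ i, a i) ∣ τ - 1) {D : ℤ}
    (hD : (D : ℚ) = (∏ i, (a i : ℚ)) * (mainPolyZero n ℓ a).derivative.eval 0)
    (hτD : IsCoprime τ D) : IsCoprime τ ((abcPoly a (aTau n ℓ a τ)).coeff 1) := by
  rw [prod_mul_eval_derivative_mainPolyZero hℓ hne, Int.cast_inj] at hD
  obtain ⟨k, rfl⟩ := Nat.exists_eq_succ_of_ne_zero hℓ
  have hcongr : (∏ i, a i) * (abcPoly a (aTau n (k + 1) a τ)).coeff 1 =
      D + τ * (-((-1) ^ (n - 1) * τ ^ k * (∏ i, (X - C (a i))).coeff 1)) := by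
    rw [coeff_one_abcPoly, hD]
    linear_combination (-(∏ i, (X - C (a i))).coeff 1) * aTau_mul_prod (ℓ := k + 1) hdvd
  refine IsCoprime.of_mul_right_right (y := ∏ i, a i) ?_
  rw [hcongr]
  exact hτD.add_mul_left_right _

variable [Fact (Irreducible (specPolyQ n ℓ a τ))]

theorem ne_zero_of_irreducible_specPolyQ (hn : 2 ≤ n) (hℓ : ℓ ≠ 0) (hdvd : (∏ i, a i) ∣ τ - 1) :
    τ ≠ 0 := by
  rintro rfl
  have hdeg : (specPolyQ n ℓ a 0).natDegree ≠ 1 := by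
    rw [specPolyQ_eq_map_abcPoly, (abcPoly_monic _ _).natDegree_map, natDegree_abcPoly,
      Fintype.card_fin]
    lia
  refine (Fact.out : Irreducible (specPolyQ n ℓ a 0)).not_isRoot_of_natDegree_ne_one hdeg
    (x := 0) ?_
  rw [IsRoot, ← coeff_zero_eq_eval_zero, specPolyQ_eq_map_abcPoly, coeff_map,
    coeff_zero_abcPoly_aTau hdvd, zero_pow hℓ, neg_zero, map_zero]

theorem abcUnitSubgroup_eq_closure {u : Fin (n - 1) → (𝓞 (AdjoinRoot (specPolyQ n ℓ a τ)))ˣ}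
    (hu : ∀ i, algebraMap (𝓞 (AdjoinRoot (specPolyQ n ℓ a τ))) (AdjoinRoot (specPolyQ n ℓ a τ))
      (u i) = AdjoinRoot.root (specPolyQ n ℓ a τ) - (a i : AdjoinRoot (specPolyQ n ℓ a τ))) :
    abcUnitSubgroup n ℓ a τ = Subgroup.closure (insert (-1) (Set.range u)) := by
  have hneg : algebraMap (𝓞 (AdjoinRoot (specPolyQ n ℓ a τ))) (AdjoinRoot (specPolyQ n ℓ a τ))
      (-1 : (𝓞 (AdjoinRoot (specPolyQ n ℓ a τ)))ˣ) = -1 := by simp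
  rw [abcUnitSubgroup]
  congr 1
  ext v
  simp only [Set.mem_ofPred_eq, ← hu, ← hneg, RingOfIntegers.coe_injective.eq_iff, Units.val_inj,
    Set.mem_insert_iff, Set.mem_range, eq_comm]

end Specialization

theorem class_group_element_of_suitable_general {n ℓ : ℕ} (hn : 2 ≤ n) (hℓ : ℓ ≠ 0)
    {a : Fin (n - 1) → ℤ} (hne : ∀ i, a i ≠ 0) {τ : ℤ} (hdvd : (∏ i, a i) ∣ τ - 1)
    {D : ℤ} (hD : (D : ℚ) = (∏ i, (a i : ℚ)) * (mainPolyZero n ℓ a).derivative.eval 0)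
    (hτD : IsCoprime τ D) [Fact (Irreducible (specPolyQ n ℓ a τ))]
    {ν : ℕ} (hν : (abcUnitSubgroup n ℓ a τ).index = ν) (hν0 : ν ≠ 0)
    (hdeg : ∀ e : Fin (n - 1) → ℕ, (∀ i, e i < ν * ℓ) →
      ∀ ζ : AlgebraicClosure (AdjoinRoot (specPolyQ n ℓ a τ)),
        ζ ^ (ℓ * ν) = algebraMap (AdjoinRoot (specPolyQ n ℓ a τ)) _
          (AdjoinRoot.root (specPolyQ n ℓ a τ) ^ ν *
            ∏ i, (AdjoinRoot.root (specPolyQ n ℓ a τ) - (a i : AdjoinRoot _)) ^ e i) →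
        ℓ ≤ Module.finrank (AdjoinRoot (specPolyQ n ℓ a τ))
          (IntermediateField.adjoin (AdjoinRoot (specPolyQ n ℓ a τ)) {ζ})) :
    ∃ C : ClassGroup (𝓞 (AdjoinRoot (specPolyQ n ℓ a τ))), orderOf C = ℓ := by
  have hp := specPolyQ_eq_map_abcPoly n ℓ a τ
  have h0 : (abcPoly a (aTau n ℓ a τ)).coeff 0 = -τ ^ ℓ := coeff_zero_abcPoly_aTau hdvd
  have hτ : τ ≠ 0 := ne_zero_of_irreducible_specPolyQ hn hℓ hdvd
  obtain ⟨x, u, hxroot, hx, huroot⟩ := exists_ringOfIntegers_root_and_units hp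
  have hx0 : x ≠ 0 := by
    rintro rfl
    rw [← coeff_zero_eq_aeval_zero', h0] at hx
    simp [hτ] at hx
  obtain ⟨I, hI⟩ := exists_span_singleton_eq_pow hx h0
    (isCoprime_coeff_one_abcPoly_aTau hℓ hne hdvd hD hτD)
  refine exists_orderOf_classGroup_eq_of_span_eq_pow hx0 hℓ hI fun m k hmk α hα => ?_
  have hpos (heven : Even (ν * ℓ)) :
      ∃ φ : 𝓞 (AdjoinRoot (specPolyQ n ℓ a τ)) →+* ℝ, 0 < φ x ^ ν ∧ ∀ i, 0 < φ (u i) := by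
    obtain ⟨φ, hφν, hφa⟩ := exists_ringHom_real_pow_pos hp hτ h0 heven
    refine ⟨φ.comp (algebraMap _ _), ?_, fun i => ?_⟩
    · simpa [hxroot] using hφν
    · simpa [huroot] using hφa i
  obtain ⟨β, e, he, hβ⟩ := exists_pow_eq_of_index_eq
    (abcUnitSubgroup_eq_closure huroot ▸ hν) (by positivity) hpos hmk hα
  have hβ' := congrArg (algebraMap _ (AdjoinRoot (specPolyQ n ℓ a τ))) hβ
  simp only [map_pow, map_mul, map_prod, hxroot, huroot] at hβ'
  refine le_of_pow_eq_of_forall_le_finrank_adjoin (by lia) hβ' fun ζ hζ => hdeg e he ζ ?_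
  rw [← hζ, ← mul_assoc, hmk]

/-- **Proposition 7.1.**  Let `(N, T₀)` be an admissible pair and let `τ` be a
suitable integer with respect to `(N, T₀)`.  Then the ideal class group of the field
`K_{a(τ)} = ℚ[x]/(f(τ,x))` contains an element of order exactly `ℓ`. -/
theorem class_group_element_of_suitable (n ℓ : ℕ) (hn : 3 ≤ n) (hℓ : 1 ≤ ℓ)
    (a : Fin (n - 1) → ℤ) (hinj : Function.Injective a) (hne : ∀ i, a i ≠ 0)
    (hsep : (mainPoly n ℓ a).Separable)
    (hGal : Nonempty ((mainPoly n ℓ a).Gal ≃* Equiv.Perm (Fin n)))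
    (hsep0 : (mainPolyZero n ℓ a).Separable)
    (N T₀ : ℕ) (hadm : Admissible n ℓ a N T₀)
    (τ : ℤ) (hτ : Suitable n ℓ a N T₀ τ)
    [Fact (Irreducible (specPolyQ n ℓ a τ))] :
    ∃ C : ClassGroup (𝓞 (AdjoinRoot (specPolyQ n ℓ a τ))), orderOf C = ℓ := by
  obtain ⟨hT, hdvd, hgcd, hSn, hfield⟩ := hτ
  obtain ⟨hdisc, hdeg⟩ := hfield
  obtain ⟨hindex, hle⟩ := hadm.2.2 τ hT hdvd hSn hdisc
  have hD := (prod_mul_eval_derivative_mainPolyZero (ℓ := ℓ) (by lia) hne).symm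
  exact class_group_element_of_suitable_general (by lia) (by lia) hne hdvd hD
    (Int.isCoprime_iff_gcd_eq_one.2 (hgcd _ hD)) rfl hindex fun e he ζ hζ =>
      hdeg _ e (Nat.pos_of_ne_zero hindex) hle he ζ (by simpa using hζ)
end
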